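/- arXiv:0802.0584 — 2 statements merged into one kernel-verified Lean document; each statement's English description precedes it below -/
import Mathlib

section
/- Let u, v ∈ F₂ with ‖u‖ ≥ ‖v‖, let ψ = σψ₁ where ψ₁ is a chain of type (C1) containing at least ‖u‖+1 factors of σ, and put k = ‖u‖+1. Suppose that for every chain ψ' of type (C1) with |ψ'| ≤ |ψ| one has: ‖σ^{k+1}ψ'(u)‖ = ‖σ^{k}ψ'(u)‖ if and only if ‖σ^{k+1}ψ'(v)‖ = ‖σ^{k}ψ'(v)‖, and ‖τ^{k+1}ψ'(u)‖ = ‖τ^{k}ψ'(u)‖ if and only if ‖τ^{k+1}ψ'(v)‖ = ‖τ^{k}ψ'(v)‖. If ‖τψ(u)‖ = ‖ψ(u)‖ or ‖τψ(v)‖ = ‖ψ(v)‖, then both ‖σψ₁(u)‖ = ‖ψ₁(u)‖ and ‖σψ₁(v)‖ = ‖ψ₁(v)‖. -/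
noncomputable section

/-- The free group of rank two. -/
abbrev F : Type := FreeGroup (Fin 2)

/-- The generator `a`. -/
def ga : F := FreeGroup.of 0

/-- The generator `b`. -/
def gb : F := FreeGroup.of 1

/-- Build an automorphism of `F` from images of the generators together with
an explicit inverse. -/
def mkAut (x y xi yi : F)
    (h1 : FreeGroup.lift ![xi, yi] x = ga)
    (h2 : FreeGroup.lift ![xi, yi] y = gb)
    (h3 : FreeGroup.lift ![x, y] xi = ga)
    (h4 : FreeGroup.lift ![x, y] yi = gb) : MulAut F :=
  MonoidHom.toMulEquiv (FreeGroup.lift ![x, y]) (FreeGroup.lift ![xi, yi])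
    (by
      ext i
      fin_cases i
      · simpa [ga] using h1
      · simpa [gb] using h2)
    (by
      ext i
      fin_cases i
      · simpa [ga] using h3
      · simpa [gb] using h4)

/-- `σ : a ↦ ab, b ↦ b`. -/
def σ : MulAut F :=
  mkAut (ga * gb) gb (ga * gb⁻¹) gb
    (by simp [ga, gb]) (by simp [ga, gb]) (by simp [ga, gb]) (by simp [ga, gb])

/-- `τ : a ↦ a, b ↦ ba`. -/
def τ : MulAut F :=
  mkAut ga (gb * ga) ga (gb * ga⁻¹)
    (by simp [ga, gb]) (by simp [ga, gb]) (by simp [ga, gb]) (by simp [ga, gb])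

/-- `δ₁ : a ↦ b⁻¹ab, b ↦ b`. -/
def δ₁ : MulAut F :=
  mkAut (gb⁻¹ * ga * gb) gb (gb * ga * gb⁻¹) gb
    (by simp [ga, gb, mul_assoc]) (by simp [ga, gb]) (by simp [ga, gb, mul_assoc]) (by simp [ga, gb])

/-- `δ₂ : a ↦ bab⁻¹, b ↦ b`. -/
def δ₂ : MulAut F :=
  mkAut (gb * ga * gb⁻¹) gb (gb⁻¹ * ga * gb) gb
    (by simp [ga, gb, mul_assoc]) (by simp [ga, gb]) (by simp [ga, gb, mul_assoc]) (by simp [ga, gb])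

/-- `δ₃ : a ↦ a, b ↦ a⁻¹ba`. -/
def δ₃ : MulAut F :=
  mkAut ga (ga⁻¹ * gb * ga) ga (ga * gb * ga⁻¹)
    (by simp [ga, gb]) (by simp [ga, gb, mul_assoc]) (by simp [ga, gb]) (by simp [ga, gb, mul_assoc])

/-- `δ₄ : a ↦ a, b ↦ aba⁻¹`. -/
def δ₄ : MulAut F :=
  mkAut ga (ga * gb * ga⁻¹) ga (ga⁻¹ * gb * ga)
    (by simp [ga, gb]) (by simp [ga, gb, mul_assoc]) (by simp [ga, gb]) (by simp [ga, gb, mul_assoc])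

/-- `π : a ↦ b, b ↦ a⁻¹`. -/
def pi' : MulAut F :=
  mkAut gb ga⁻¹ gb⁻¹ ga
    (by simp [ga, gb]) (by simp [ga, gb]) (by simp [ga, gb]) (by simp [ga, gb])

/-- Word length of (the reduced word representing) an element of `F`. -/
def len (w : F) : ℕ := w.toWord.length

/-- Cyclic length: minimal word length among all conjugates. -/
def cyclen (w : F) : ℕ := sInf {n | ∃ g : F, len (g * w * g⁻¹) = n}

/-- The chain `τ^{m_k}σ^{l_k}⋯τ^{m_1}σ^{l_1}` of type (C1) determined by the list
`[(l_k, m_k), …, (l_1, m_1)]` of pairs of exponents. -/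
def chainC1 (c : List (ℕ × ℕ)) : MulAut F :=
  (c.map fun p => τ ^ p.2 * σ ^ p.1).prod

/-- The chain `τ^{-m_k}σ^{-l_k}⋯τ^{-m_1}σ^{-l_1}` of type (C2) determined by the list
`[(l_k, m_k), …, (l_1, m_1)]` of pairs of exponents. -/
def chainC2 (c : List (ℕ × ℕ)) : MulAut F :=
  (c.map fun p => (τ ^ p.2)⁻¹ * (σ ^ p.1)⁻¹).prod

/-- Number of factors of `σ` in a chain. -/
def sigmaCount (c : List (ℕ × ℕ)) : ℕ := (c.map Prod.fst).sum

/-- Number of factors of `τ` in a chain. -/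
def tauCount (c : List (ℕ × ℕ)) : ℕ := (c.map Prod.snd).sum

/-- The length `Σ (l_i + m_i)` of a chain. -/
def chainLen (c : List (ℕ × ℕ)) : ℕ := sigmaCount c + tauCount c

/-- A Whitehead automorphism of type (W1): it permutes `{a, a⁻¹, b, b⁻¹}`. -/
def IsW1 (β : MulAut F) : Prop :=
  β ga ∈ ({ga, ga⁻¹, gb, gb⁻¹} : Set F) ∧ β gb ∈ ({ga, ga⁻¹, gb, gb⁻¹} : Set F)

/-- A chain of type (C1). -/
def IsC1 (φ : MulAut F) : Prop := ∃ c : List (ℕ × ℕ), c ≠ [] ∧ φ = chainC1 c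

/-- A chain of type (C2). -/
def IsC2 (φ : MulAut F) : Prop := ∃ c : List (ℕ × ℕ), c ≠ [] ∧ φ = chainC2 c

/-- A positive element: a product of the generators `a` and `b`. -/
def IsPositive (w : F) : Prop := w ∈ Submonoid.closure ({ga, gb} : Set F)

/-- The four automorphisms `δ₁, δ₂, δ₃, δ₄`. -/
def δIdx : Fin 4 → MulAut F := ![δ₁, δ₂, δ₃, δ₄]

namespace Stmt10

open FreeGroup List

/-- A letter of the alphabet. -/
abbrev Lt : Type := Fin 2 × Bool

theorem cyclen_le_norm (x : F) (g : F) : cyclen x ≤ FreeGroup.norm (g * x * g⁻¹) :=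
  Nat.sInf_le ⟨g, rfl⟩

theorem cyclen_conj {x y : F} (h : IsConj x y) : cyclen x = cyclen y := by
  obtain ⟨c, rfl⟩ := isConj_iff.1 h
  unfold cyclen
  congr 1
  ext n
  constructor
  · rintro ⟨g, hg⟩
    exact ⟨g * c⁻¹, by rw [← hg]; congr 1; group⟩
  · rintro ⟨g, hg⟩
    exact ⟨g * c, by rw [← hg]; congr 1; group⟩

theorem norm_pow_le (x : F) (n : ℕ) : FreeGroup.norm (x ^ n) ≤ n * FreeGroup.norm x := by
  induction n with
  | zero => simp
  | succ n ih =>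
    rw [pow_succ]
    refine (FreeGroup.norm_mul_le _ _).trans ?_
    rw [Nat.succ_mul]; omega

theorem norm_pow_cyc {L : List Lt} (h : IsCyclicallyReduced L) (n : ℕ) :
    FreeGroup.norm ((FreeGroup.mk L) ^ n) = n * L.length := by
  rw [FreeGroup.pow_mk, FreeGroup.norm, FreeGroup.toWord_mk,
    (h.flatten_replicate n).isReduced.reduce_eq]
  simp

theorem cyclen_mk {L : List Lt} (h : IsCyclicallyReduced L) :
    cyclen (FreeGroup.mk L) = L.length := by
  apply le_antisymm
  · have := cyclen_le_norm (FreeGroup.mk L) 1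
    refine this.trans ?_
    simpa using FreeGroup.norm_mk_le (L₁ := L)
  · refine le_csInf ⟨_, 1, rfl⟩ ?_
    rintro n ⟨g, rfl⟩
    change L.length ≤ FreeGroup.norm _
    by_contra hlt
    push Not at hlt
    set y := g * FreeGroup.mk L * g⁻¹ with hy
    have h1 : ∀ n : ℕ, n * L.length ≤ n * FreeGroup.norm y + 2 * FreeGroup.norm g := by
      intro n
      have e : (FreeGroup.mk L) ^ n = g⁻¹ * y ^ n * g := by
        rw [hy, conj_pow]; group
      rw [← norm_pow_cyc h n, e]
      have a1 := FreeGroup.norm_mul_le (g⁻¹ * y ^ n) g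
      have a2 := FreeGroup.norm_mul_le (g⁻¹) (y ^ n)
      have a3 := norm_pow_le y n
      rw [FreeGroup.norm_inv_eq] at a2
      omega
    have h2 := h1 (2 * FreeGroup.norm g + 1)
    nlinarith

/-- `x` is conjugate to the cyclically reduced word `L`. -/
def Rp (x : F) (L : List Lt) : Prop := IsCyclicallyReduced L ∧ IsConj x (FreeGroup.mk L)

theorem Rp.cyclen {x : F} {L : List Lt} (h : Rp x L) : cyclen x = L.length := by
  rw [cyclen_conj h.2, cyclen_mk h.1]

theorem exists_Rp (x : F) : ∃ L, Rp x L := by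
  refine ⟨reduceCyclically x.toWord, reduceCyclically.isCyclicallyReduced isReduced_toWord, ?_⟩
  rw [isConj_comm, isConj_iff]
  refine ⟨FreeGroup.mk (reduceCyclically.conjugator x.toWord), ?_⟩
  rw [FreeGroup.inv_mk, FreeGroup.mul_mk, FreeGroup.mul_mk,
    reduceCyclically.conj_conjugator_reduceCyclically, FreeGroup.mk_toWord]

theorem cyc_iff {x : Lt} {l : List Lt} :
    IsCyclicallyReduced (x :: l) ↔ FreeGroup.IsReduced (x :: l ++ [x]) := by
  unfold IsCyclicallyReduced FreeGroup.IsReduced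
  rw [List.isChain_append]
  simp

theorem cyc_rot {l₁ l₂ : List Lt} (h : IsCyclicallyReduced (l₁ ++ l₂)) :
    IsCyclicallyReduced (l₂ ++ l₁) := by
  rcases l₁ with _ | ⟨x, l₁⟩
  · simpa using h
  rcases l₂ with _ | ⟨y, l₂⟩
  · simpa using h
  rw [List.cons_append, cyc_iff] at h ⊢
  unfold FreeGroup.IsReduced at *
  have h1 : List.IsChain (fun a b : Lt => a.1 = b.1 → a.2 = b.2) ((x :: l₁) ++ (y :: (l₂ ++ [x]))) := by
    simpa using h
  rw [List.isChain_split] at h1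
  have : y :: (l₂ ++ x :: l₁) ++ [y] = (y :: l₂) ++ x :: (l₁ ++ [y]) := by simp
  rw [this, List.isChain_split]
  refine ⟨by simpa using h1.2, by simpa using h1.1⟩

theorem Rp.rot {x : F} {l₁ l₂ : List Lt} (h : Rp x (l₁ ++ l₂)) : Rp x (l₂ ++ l₁) := by
  refine ⟨cyc_rot h.1, h.2.trans ?_⟩
  rw [isConj_iff]
  refine ⟨(FreeGroup.mk l₁)⁻¹, ?_⟩
  rw [← FreeGroup.mul_mk, ← FreeGroup.mul_mk]
  group

/-! ### The counting automaton -/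

/-- sign of a letter -/
def sg (b : Bool) : ℤ := if b then 1 else -1

/-- final state -/
def st (c : Fin 2) : List Lt → Bool × ℤ → Bool × ℤ
  | [], s => s
  | x :: l, s => if x.1 = c then st c l (x.2, 0) else st c l (s.1, s.2 + sg x.2)

/-- total output -/
def out (c : Fin 2) (g : Bool → ℤ → Bool → ℤ) : List Lt → Bool × ℤ → ℤ
  | [], _ => 0
  | x :: l, s => if x.1 = c then g s.1 s.2 x.2 + out c g l (x.2, 0)
      else out c g l (s.1, s.2 + sg x.2)

/-- cyclic statistic -/
def stat (c : Fin 2) (g : Bool → ℤ → Bool → ℤ) (L : List Lt) : ℤ :=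
  out c g L (st c L (true, 0))

theorem st_append (c : Fin 2) (l m : List Lt) (s) : st c (l ++ m) s = st c m (st c l s) := by
  induction l generalizing s with
  | nil => rfl
  | cons x l ih => simp only [List.cons_append, st]; split <;> simp [ih]

theorem out_append (c : Fin 2) (g) (l m : List Lt) (s) :
    out c g (l ++ m) s = out c g l s + out c g m (st c l s) := by
  induction l generalizing s with
  | nil => simp [out, st]
  | cons x l ih => simp only [List.cons_append, st, out]; split <;> simp [ih, add_assoc]

theorem st_indep (c : Fin 2) (l : List Lt) (h : ∃ x ∈ l, x.1 = c) (s t) :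
    st c l s = st c l t := by
  induction l generalizing s t with
  | nil => simp at h
  | cons x l ih =>
    simp only [st]
    split
    · rfl
    · rename_i hx
      apply ih
      obtain ⟨y, hy, hyc⟩ := h
      rcases List.mem_cons.1 hy with rfl | hy
      · exact absurd hyc hx
      · exact ⟨y, hy, hyc⟩

theorem out_none (c : Fin 2) (g) (l : List Lt) (h : ∀ x ∈ l, x.1 ≠ c) (s) : out c g l s = 0 := by
  induction l generalizing s with
  | nil => rfl
  | cons x l ih =>
    simp only [out]
    rw [if_neg (h x (by simp))]
    exact ih (fun y hy => h y (by simp [hy])) _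

theorem stat_rot (c : Fin 2) (g) (l m : List Lt) : stat c g (l ++ m) = stat c g (m ++ l) := by
  by_cases h : ∃ x ∈ l ++ m, x.1 = c
  · have h' : ∃ x ∈ m ++ l, x.1 = c := by
      obtain ⟨x, hx, hc⟩ := h
      exact ⟨x, by simp at hx ⊢; tauto, hc⟩
    unfold stat
    rw [out_append, out_append]
    have e1 : st c l (st c (l ++ m) (true, 0)) = st c (m ++ l) (true, 0) := by
      rw [← st_append, List.append_assoc, st_append]
      exact st_indep c _ h' _ _
    have e2 : st c m (st c (m ++ l) (true, 0)) = st c (l ++ m) (true, 0) := by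
      rw [← st_append, List.append_assoc, st_append]
      exact st_indep c _ h _ _
    rw [e1, e2, add_comm]
  · push Not at h
    unfold stat
    rw [out_none c g _ h, out_none c g]
    intro x hx; apply h; simp at hx ⊢; tauto

theorem out_nonneg (c : Fin 2) (g) (hg : ∀ s k t, 0 ≤ g s k t) (l : List Lt) (s) :
    0 ≤ out c g l s := by
  induction l generalizing s with
  | nil => simp [out]
  | cons x l ih =>
    simp only [out]; split
    · exact add_nonneg (hg _ _ _) (ih _)
    · exact ih _

/-- weight: number of letters in negative runs -/
def wq (s : Bool) (k : ℤ) (t : Bool) : ℤ := if s = t ∧ sg s * k < 0 then |k| else 0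

/-- exponent increment -/
def avg (s t : Bool) : ℤ := (if s then 1 else 0) - (if t then 0 else 1)

/-- weight: length increment -/
def wd (s : Bool) (k : ℤ) (t : Bool) : ℤ := |k + avg s t| - |k|

theorem wq_nonneg (s k t) : 0 ≤ wq s k t := by
  unfold wq; split
  · exact abs_nonneg _
  · exact le_rfl

theorem wq_le (s k t) : wq s k t ≤ |k| := by
  unfold wq; split
  · exact le_rfl
  · exact abs_nonneg _

theorem out_wq_le (c : Fin 2) (l : List Lt) (s) :
    out c wq l s + |(st c l s).2| ≤ l.length + |s.2| := by
  induction l generalizing s with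
  | nil => simp [out, st]
  | cons x l ih =>
    simp only [out, st, List.length_cons]
    split
    · have := ih (x.2, 0)
      have := wq_le s.1 s.2 x.2
      simp at *
      omega
    · have := ih (s.1, s.2 + sg x.2)
      have h1 := abs_add_le s.2 (sg x.2)
      have h2 : |sg x.2| = 1 := by cases x.2 <;> simp [sg]
      simp at *
      omega

theorem stat_wq_le (c : Fin 2) (L : List Lt) : stat c wq L ≤ L.length := by
  by_cases h : ∃ x ∈ L, x.1 = c
  · have := out_wq_le c L (st c L (true, 0))
    rw [st_indep c L h (st c L (true, 0)) (true, 0)] at this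
    unfold stat
    omega
  · push Not at h
    unfold stat
    rw [out_none c _ _ h]; positivity

/-! ### Syllables -/

/-- block of letters -/
def bl (o : Fin 2) (n : ℤ) : List Lt := List.replicate n.natAbs (o, decide (0 < n))

/-- word of a list of syllables -/
def flat (c o : Fin 2) : List (Bool × ℤ) → List Lt
  | [] => []
  | p :: t => (c, p.1) :: (bl o p.2 ++ flat c o t)

/-- sign of the next syllable -/
def hd : List (Bool × ℤ) → Bool → Bool
  | [], e => e
  | p :: _, _ => p.1

/-- reducedness of a list of syllables followed by the sign `e` -/
def Good : List (Bool × ℤ) → Bool → Prop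
  | [], _ => True
  | p :: t, e => (p.2 = 0 → p.1 = hd t e) ∧ Good t e

/-- action on syllables -/
def sig : List (Bool × ℤ) → Bool → List (Bool × ℤ)
  | [], _ => []
  | p :: t, e => (p.1, p.2 + avg p.1 (hd t e)) :: sig t e

/-- sums of weights over syllables -/
def sm (g : Bool → ℤ → Bool → ℤ) : List (Bool × ℤ) → Bool → ℤ
  | [], _ => 0
  | p :: t, e => g p.1 p.2 (hd t e) + sm g t e

theorem hd_cons (p t e) : hd (p :: t) e = p.1 := rfl

theorem hd_sig (d e f) : hd (sig d f) e = hd d e := by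
  cases d <;> simp [sig, hd]

theorem flat_hd (c o : Fin 2) (d e) : ∃ r, flat c o d ++ [(c, e)] = (c, hd d e) :: r := by
  cases d <;> simp [flat, hd]

theorem red_rep {c o : Fin 2} (hco : o ≠ c) (m : ℕ) (b e : Bool) (r : List Lt) :
    FreeGroup.IsReduced (List.replicate (m + 1) (o, b) ++ (c, e) :: r) ↔
      FreeGroup.IsReduced ((c, e) :: r) := by
  induction m with
  | zero => simp [FreeGroup.isReduced_cons_cons, hco]
  | succ m ih =>
    rw [← ih]
    simp [List.replicate_succ, FreeGroup.isReduced_cons_cons]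

theorem red_syl {c o : Fin 2} (hco : o ≠ c) (n : ℤ) (e f : Bool) (r : List Lt) :
    FreeGroup.IsReduced ((c, e) :: (bl o n ++ (c, f) :: r)) ↔
      (n = 0 → e = f) ∧ FreeGroup.IsReduced ((c, f) :: r) := by
  by_cases hn : n = 0
  · subst hn; simp [bl, FreeGroup.isReduced_cons_cons]
  · obtain ⟨m, hm⟩ : ∃ m, n.natAbs = m + 1 := ⟨n.natAbs - 1, by omega⟩
    rw [← red_rep hco m (decide (0 < n)) f r]
    simp [bl, hm, List.replicate_succ, FreeGroup.isReduced_cons_cons, hco.symm, hn]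

theorem good_iff {c o : Fin 2} (hco : o ≠ c) (d e) :
    Good d e ↔ FreeGroup.IsReduced (flat c o d ++ [(c, e)]) := by
  induction d with
  | nil => simp [Good, flat]
  | cons p t ih =>
    simp only [Good, flat, List.cons_append, List.append_assoc]
    rw [ih]
    obtain ⟨r, hr⟩ := flat_hd c o t e
    rw [hr, red_syl hco]

theorem good_sig {d e} (h : Good d e) : Good (sig d e) e := by
  induction d with
  | nil => trivial
  | cons p t ih =>
    refine ⟨?_, ih h.2⟩
    simp only [hd_sig]
    intro h0
    by_contra hne
    have h1 := h.1
    revert hne h0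
    generalize p.1 = x at *
    generalize hd t e = y at *
    cases x <;> cases y <;> simp [avg] at * <;> omega

theorem group_exists {c o : Fin 2} (hco : o ≠ c) (e : Bool) (L : List Lt)
    (h : FreeGroup.IsReduced (L ++ [(c, e)])) : ∃ n d, L = bl o n ++ flat c o d := by
  induction L with
  | nil => exact ⟨0, [], by simp [bl, flat]⟩
  | cons x l ih =>
    have h' : FreeGroup.IsReduced (l ++ [(c, e)]) := List.IsChain.tail h
    obtain ⟨n, d, rfl⟩ := ih h'
    obtain ⟨i, s⟩ := x
    by_cases hi : i = c
    · subst hi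
      exact ⟨0, (s, n) :: d, by simp [bl, flat]⟩
    · have hi : i = o := by omega
      subst hi
      by_cases hn : n = 0
      · subst hn
        refine ⟨sg s, d, ?_⟩
        cases s <;> simp [bl, sg]
      · obtain ⟨m, hm⟩ : ∃ m, n.natAbs = m + 1 := ⟨n.natAbs - 1, by omega⟩
        have hs : s = decide (0 < n) := by
          simp [bl, hm, List.replicate_succ, FreeGroup.isReduced_cons_cons] at h
          exact h.1
        refine ⟨n + sg s, d, ?_⟩
        have h1 : (n + sg s).natAbs = n.natAbs + 1 := by
          subst hs
          by_cases h0 : 0 < n <;> simp [sg, h0] <;> omega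
        have h2 : decide (0 < n + sg s) = s := by
          subst hs
          by_cases h0 : 0 < n <;> simp [sg, h0] <;> omega
        simp only [bl, h1, h2, List.replicate_succ]
        rw [← hs]; simp

/-- `d` is a cyclic syllable decomposition representing `x`. -/
def Sp (c o : Fin 2) (x : F) (d : List (Bool × ℤ)) : Prop :=
  d ≠ [] ∧ Good d (hd d true) ∧ IsConj x (FreeGroup.mk (flat c o d))

theorem hd_ne {d : List (Bool × ℤ)} (h : d ≠ []) (e f) : hd d e = hd d f := by
  cases d <;> simp_all [hd]

theorem Sp.rp {c o : Fin 2} (hco : o ≠ c) {x d} (h : Sp c o x d) : Rp x (flat c o d) := by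
  obtain ⟨h1, h2, h3⟩ := h
  refine ⟨?_, h3⟩
  rw [good_iff hco] at h2
  cases d with
  | nil => exact absurd rfl h1
  | cons p t =>
    simp only [flat, hd] at h2 ⊢
    exact cyc_iff.2 h2

theorem Rp.sp {c o : Fin 2} (hco : o ≠ c) {x L} (h : Rp x L) (hL : ∃ y ∈ L, y.1 = c) :
    ∃ d, Sp c o x d ∧ ∃ l m, L = l ++ m ∧ flat c o d = m ++ l := by
  obtain ⟨y, hy, hyc⟩ := hL
  obtain ⟨l, m, rfl⟩ := List.append_of_mem hy
  obtain ⟨i, e⟩ := y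
  simp only at hyc
  subst hyc
  have h2 := h.rot
  have h3 := h2.1
  rw [List.cons_append, cyc_iff] at h3
  obtain ⟨n, d, hd'⟩ := group_exists hco e _ h3
  have hn : n = 0 := by
    by_contra hn
    obtain ⟨m, hm⟩ : ∃ m, n.natAbs = m + 1 := ⟨n.natAbs - 1, by omega⟩
    simp [bl, hm, List.replicate_succ] at hd'
    exact hco hd'.1.1.symm
  subst hn
  simp only [bl, Int.natAbs_zero, List.replicate_zero, List.nil_append] at hd'
  cases d with
  | nil => simp [flat] at hd'
  | cons p t =>
    have hp : p.1 = e := by simp [flat] at hd'; exact hd'.1.symm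
    refine ⟨p :: t, ⟨by simp, ?_, ?_⟩, l, (i, e) :: m, rfl, by rw [← hd']; simp⟩
    · rw [good_iff hco, ← hd']
      simpa [hd, hp] using h3
    · rw [← hd']; exact h2.2

theorem mk_bl (o : Fin 2) (n : ℤ) : FreeGroup.mk (bl o n) = (FreeGroup.of o) ^ n := by
  have key : ∀ (b : Bool) (m : ℕ), FreeGroup.mk (List.replicate m (o, b))
      = (FreeGroup.of o) ^ (sg b * m) := by
    intro b m
    induction m with
    | zero => simp [FreeGroup.one_eq_mk]
    | succ m ih =>
      have : List.replicate (m + 1) (o, b) = [(o, b)] ++ List.replicate m (o, b) := by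
        simp [List.replicate_succ]
      rw [this, ← FreeGroup.mul_mk, ih]
      have : FreeGroup.mk [(o, b)] = (FreeGroup.of o) ^ (sg b) := by
        cases b
        · simp [sg, FreeGroup.of, FreeGroup.inv_mk, FreeGroup.invRev]
        · simp [sg, FreeGroup.of]
      rw [this, ← zpow_add]
      congr 1; push_cast; ring
  unfold bl
  rw [key]
  congr 1
  rcases abs_cases n with ⟨ha, hb⟩ | ⟨ha, hb⟩ <;>
    by_cases h : 0 < n <;> simp [sg, h] <;> omega

theorem mk_flat_cons (c o : Fin 2) (p t) : FreeGroup.mk (flat c o (p :: t)) =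
    (FreeGroup.of c) ^ (sg p.1) * (FreeGroup.of o) ^ p.2 * FreeGroup.mk (flat c o t) := by
  have : flat c o (p :: t) = [(c, p.1)] ++ (bl o p.2 ++ flat c o t) := by simp [flat]
  rw [this, ← FreeGroup.mul_mk, ← FreeGroup.mul_mk, mk_bl, mul_assoc]
  congr 1
  cases p.1
  · simp [sg, FreeGroup.of, FreeGroup.inv_mk, FreeGroup.invRev]
  · simp [sg, FreeGroup.of]

/-- correction exponent -/
def cr (e : Bool) : ℤ := if e then 0 else 1

theorem map_flat (c o : Fin 2) (φ : MulAut F)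
    (h1 : φ (FreeGroup.of c) = FreeGroup.of c * FreeGroup.of o)
    (h2 : φ (FreeGroup.of o) = FreeGroup.of o) (d e) :
    φ (FreeGroup.mk (flat c o d)) = (FreeGroup.of o) ^ (-cr (hd d e)) *
      FreeGroup.mk (flat c o (sig d e)) * (FreeGroup.of o) ^ (cr e) := by
  induction d with
  | nil => simp [flat, hd, sig, ← FreeGroup.one_eq_mk]
  | cons p t ih =>
    rw [mk_flat_cons, _root_.map_mul, _root_.map_mul, ih, sig, mk_flat_cons, map_zpow, map_zpow, h1, h2]
    simp only [hd_cons]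
    generalize hd t e = y
    generalize FreeGroup.mk (flat c o (sig t e)) = W
    obtain ⟨x, n⟩ := p
    have hx : (FreeGroup.of c * FreeGroup.of o) ^ (sg x) = (FreeGroup.of o) ^ (-cr x) *
        (FreeGroup.of c) ^ (sg x) * (FreeGroup.of o) ^ (1 - cr x) := by
      cases x <;> simp [sg, cr]
    have hy : avg x y = 1 - cr x - cr y := by cases x <;> cases y <;> simp [avg, cr]
    simp only [hx, hy]
    have : n + (1 - cr x - cr y) = (1 - cr x) + n + (- cr y) := by ring
    rw [this, zpow_add, zpow_add]
    simp only [mul_assoc]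

theorem Sp.map {c o : Fin 2} {φ : MulAut F}
    (h1 : φ (FreeGroup.of c) = FreeGroup.of c * FreeGroup.of o)
    (h2 : φ (FreeGroup.of o) = FreeGroup.of o) {x d} (h : Sp c o x d) :
    Sp c o (φ x) (sig d (hd d true)) := by
  refine ⟨?_, ?_, ?_⟩
  · cases d with
    | nil => exact absurd rfl h.1
    | cons => simp [sig]
  · rw [hd_sig]; exact good_sig h.2.1
  · have h3 : IsConj (φ x) (φ (FreeGroup.mk (flat c o d))) := by
      obtain ⟨g, hg⟩ := isConj_iff.1 h.2.2
      exact isConj_iff.2 ⟨φ g, by rw [← hg]; simp⟩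
    refine h3.trans ?_
    rw [map_flat c o φ h1 h2 d (hd d true), hd_ne h.1 (hd d true) true, isConj_iff]
    refine ⟨(FreeGroup.of o) ^ (cr (hd d true)), ?_⟩
    group

theorem Rp.map_none {c o : Fin 2} {φ : MulAut F}
    (h2 : φ (FreeGroup.of o) = FreeGroup.of o) (hco : o ≠ c) {x L} (h : Rp x L)
    (hL : ¬ ∃ y ∈ L, y.1 = c) : Rp (φ x) L := by
  refine ⟨h.1, ?_⟩
  have h3 : IsConj (φ x) (φ (FreeGroup.mk L)) := by
    obtain ⟨g, hg⟩ := isConj_iff.1 h.2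
    exact isConj_iff.2 ⟨φ g, by rw [← hg]; simp⟩
  have h4 : φ (FreeGroup.mk L) = FreeGroup.mk L := by
    have : ∀ l : List Lt, (∀ y ∈ l, y.1 ≠ c) → φ (FreeGroup.mk l) = FreeGroup.mk l := by
      intro l
      induction l with
      | nil => intro _; rw [← FreeGroup.one_eq_mk]; simp
      | cons y l ih =>
        intro hl
        have e : y :: l = [y] ++ l := rfl
        rw [e, ← FreeGroup.mul_mk, _root_.map_mul, ih (fun z hz => hl z (by simp [hz]))]
        congr 1
        obtain ⟨i, s⟩ := y
        have : i = o := by have := hl (i, s) (by simp); simp at this; omega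
        subst this
        have hf : FreeGroup.mk [(i, false)] = (FreeGroup.of i)⁻¹ := by
          simp [FreeGroup.of, FreeGroup.inv_mk, FreeGroup.invRev]
        cases s
        · rw [hf, _root_.map_inv, h2]
        · exact h2
    apply this
    push Not at hL
    exact hL
  rwa [h4] at h3

/-! ### Statistics on syllables -/

theorem st_bl {c o : Fin 2} (hco : o ≠ c) (n : ℤ) (l : List Lt) (s : Bool) (k : ℤ) :
    st c (bl o n ++ l) (s, k) = st c l (s, k + n) := by
  have key : ∀ (b : Bool) (m : ℕ) (k : ℤ), st c (List.replicate m (o, b) ++ l) (s, k)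
      = st c l (s, k + sg b * m) := by
    intro b m
    induction m with
    | zero => simp
    | succ m ih =>
      intro k
      simp only [List.replicate_succ, List.cons_append, st, hco, if_false]
      rw [ih]
      congr 2; push_cast; ring
  unfold bl
  rw [key]
  congr 3
  rcases abs_cases n with ⟨ha, hb⟩ | ⟨ha, hb⟩ <;>
    by_cases h : 0 < n <;> simp [sg, h] <;> omega

theorem out_bl {c o : Fin 2} (hco : o ≠ c) (g) (n : ℤ) (l : List Lt) (s : Bool) (k : ℤ) :
    out c g (bl o n ++ l) (s, k) = out c g l (s, k + n) := by
  have key : ∀ (b : Bool) (m : ℕ) (k : ℤ), out c g (List.replicate m (o, b) ++ l) (s, k)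
      = out c g l (s, k + sg b * m) := by
    intro b m
    induction m with
    | zero => simp
    | succ m ih =>
      intro k
      simp only [List.replicate_succ, List.cons_append, out, hco, if_false]
      rw [ih]
      congr 2; push_cast; ring
  unfold bl
  rw [key]
  congr 3
  rcases abs_cases n with ⟨ha, hb⟩ | ⟨ha, hb⟩ <;>
    by_cases h : 0 < n <;> simp [sg, h] <;> omega

theorem st_bl' {o : Fin 2} (n : ℤ) (hn : n ≠ 0) (l : List Lt) (s) :
    st o (bl o n ++ l) s = st o l (decide (0 < n), 0) := by
  have key : ∀ (b : Bool) (m : ℕ) s, st o (List.replicate (m + 1) (o, b) ++ l) s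
      = st o l (b, 0) := by
    intro b m
    induction m with
    | zero => simp [st]
    | succ m ih =>
      intro s
      rw [List.replicate_succ, List.cons_append, st, if_pos rfl, ih]
  obtain ⟨m, hm⟩ : ∃ m, n.natAbs = m + 1 := ⟨n.natAbs - 1, by omega⟩
  unfold bl
  rw [hm, key]

theorem out_bl' {o : Fin 2} (g) (n : ℤ) (hn : n ≠ 0) (l : List Lt) (s : Bool × ℤ) :
    out o g (bl o n ++ l) s = g s.1 s.2 (decide (0 < n)) +
      (|n| - 1) * g (decide (0 < n)) 0 (decide (0 < n)) + out o g l (decide (0 < n), 0) := by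
  have key : ∀ (b : Bool) (m : ℕ) (s : Bool × ℤ), out o g (List.replicate (m + 1) (o, b) ++ l) s
      = g s.1 s.2 b + m * g b 0 b + out o g l (b, 0) := by
    intro b m
    induction m with
    | zero => simp [out]
    | succ m ih =>
      intro s
      rw [List.replicate_succ, List.cons_append, out, if_pos rfl, ih]
      push_cast; ring
  obtain ⟨m, hm⟩ : ∃ m, n.natAbs = m + 1 := ⟨n.natAbs - 1, by omega⟩
  have : |n| = m + 1 := by rw [Int.abs_eq_natAbs, hm]; simp
  unfold bl
  rw [hm, key, this]
  ring

theorem out_flat {c o : Fin 2} (hco : o ≠ c) (g) (d e) (s : Bool) (k : ℤ) :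
    out c g (flat c o d) (s, k) + g (st c (flat c o d) (s, k)).1 (st c (flat c o d) (s, k)).2 e
      = g s k (hd d e) + sm g d e := by
  induction d generalizing s k with
  | nil => simp [flat, out, st, hd, sm]
  | cons p t ih =>
    simp only [flat, out, st, if_true, out_bl hco, st_bl hco, sm, hd_cons]
    have := ih p.1 (0 + p.2)
    rw [zero_add] at this ⊢
    linarith

theorem flat_has (c o : Fin 2) {d} (h : d ≠ []) : ∃ y ∈ flat c o d, y.1 = c := by
  cases d with
  | nil => exact absurd rfl h
  | cons p t => exact ⟨(c, p.1), by simp [flat], rfl⟩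

theorem stat_flat {c o : Fin 2} (hco : o ≠ c) (g) {d} (h : d ≠ []) :
    stat c g (flat c o d) = sm g d (hd d true) := by
  unfold stat
  have h1 := out_flat hco g d (hd d true) (st c (flat c o d) (true, 0)).1
    (st c (flat c o d) (true, 0)).2
  rw [hd_ne h (hd d true) true, Prod.mk.eta,
    st_indep c _ (flat_has c o h) (st c (flat c o d) (true, 0)) (true, 0)] at h1
  linarith

theorem length_bl (o : Fin 2) (n : ℤ) : ((bl o n).length : ℤ) = |n| := by
  simp [bl]

theorem length_sig (c o : Fin 2) (d e) :
    ((flat c o (sig d e)).length : ℤ) = (flat c o d).length + sm wd d e := by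
  induction d with
  | nil => simp [sig, flat, sm]
  | cons p t ih =>
    simp only [sig, flat, sm, List.length_cons, List.length_append, wd]
    push_cast
    rw [length_bl, length_bl, ih]
    ring

theorem sm_nonneg (g) (hg : ∀ s k t, 0 ≤ g s k t) (d e) : 0 ≤ sm g d e := by
  induction d with
  | nil => simp [sm]
  | cons p t ih => exact add_nonneg (hg _ _ _) ih

theorem wq_step (s k t) : wq s (k + avg s t) t = 0 ∨ wq s (k + avg s t) t + 1 ≤ wq s k t := by
  unfold wq
  rcases abs_cases k with ⟨ha, hb⟩ | ⟨ha, hb⟩ <;>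
  rcases abs_cases (k + avg s t) with ⟨hc, hd⟩ | ⟨hc, hd⟩ <;>
  rw [ha, hc] <;>
  cases s <;> cases t <;> simp [sg, avg] at * <;> (try split_ifs) <;> omega

theorem sm_wq_sig (d e) : sm wq (sig d e) e = 0 ∨ sm wq (sig d e) e + 1 ≤ sm wq d e := by
  induction d with
  | nil => left; rfl
  | cons p t ih =>
    simp only [sig, sm, hd_sig]
    have := wq_step p.1 p.2 (hd t e)
    have := wq_nonneg p.1 p.2 (hd t e)
    have := sm_nonneg wq wq_nonneg t e
    omega

/-- `σ`-step for the statistic with the same marker. -/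
theorem step_same {c o : Fin 2} (hco : o ≠ c) {φ : MulAut F}
    (h1 : φ (FreeGroup.of c) = FreeGroup.of c * FreeGroup.of o)
    (h2 : φ (FreeGroup.of o) = FreeGroup.of o) {x L} (h : Rp x L) :
    ∃ L', Rp (φ x) L' ∧ (stat c wq L' = 0 ∨ stat c wq L' + 1 ≤ stat c wq L) := by
  by_cases hL : ∃ y ∈ L, y.1 = c
  · obtain ⟨d, hd1, l, m, rfl, hlm⟩ := h.sp hco hL
    have h3 := hd1.map h1 h2
    refine ⟨_, h3.rp hco, ?_⟩
    rw [stat_rot c wq l m, ← hlm, stat_flat hco _ h3.1, stat_flat hco _ hd1.1, hd_sig]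
    exact sm_wq_sig _ _
  · refine ⟨L, h.map_none h2 hco hL, Or.inl ?_⟩
    push Not at hL
    exact out_none c _ _ hL _

/-- invariant -/
def Iv (s s' : Bool × ℤ) (e : Bool) : Prop :=
  0 ≤ sg e * s'.2 ∧ (s'.1 = !e → s.1 = s'.1 ∧ s.2 = 0)

/-- pending amount -/
def pd (s' : Bool × ℤ) (e : Bool) : ℤ := if s'.1 = !e then |s'.2| else 0

/-- next state after a block -/
def nx (s : Bool × ℤ) (n : ℤ) : Bool × ℤ := if n = 0 then s else (decide (0 < n), 0)

/-- output of a block -/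
def em (s : Bool × ℤ) (n : ℤ) : ℤ := if n = 0 then 0 else wq s.1 s.2 (decide (0 < n))

theorem st_nx (o : Fin 2) (n : ℤ) (s l) : st o (bl o n ++ l) s = st o l (nx s n) := by
  by_cases hn : n = 0
  · simp [hn, bl, nx]
  · rw [st_bl' n hn]; simp [nx, hn]

theorem out_em (o : Fin 2) (n : ℤ) (s l) :
    out o wq (bl o n ++ l) s = em s n + out o wq l (nx s n) := by
  by_cases hn : n = 0
  · simp [hn, bl, nx, em]
  · have w0 : ∀ b, wq b 0 b = 0 := by intro b; simp [wq]
    rw [out_bl' wq n hn, w0]; simp [nx, em, hn]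

theorem cross_core (x y : Bool) (n : ℤ) (a : Bool) (k : ℤ) (a' : Bool) (k' : ℤ)
    (hg : n + avg x y = 0 → x = y) (hI : Iv (a, k) (a', k') x) :
    Iv (nx (a, k + sg x) n) (nx (a', k' + sg x) (n + avg x y)) y ∧
    em (a', k' + sg x) (n + avg x y) + pd (nx (a', k' + sg x) (n + avg x y)) y ≤
      em (a, k + sg x) n + pd (a', k') x := by
  have e0 : 0 ≤ em (a, k + sg x) n := by
    unfold em; split
    · exact le_rfl
    · exact wq_nonneg _ _ _
  have hI1 := hI.1
  have hI2 := hI.2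
  simp only at hI1 hI2
  rcases lt_trichotomy (n + avg x y) 0 with h' | h' | h'
  · have f1 : nx (a', k' + sg x) (n + avg x y) = (false, 0) := by
      simp [nx, h'.ne, h'.not_gt]
    have f2 : em (a', k' + sg x) (n + avg x y) = wq a' (k' + sg x) false := by
      simp [em, h'.ne, h'.not_gt]
    have hn : y = true ∨ x = true → n < 0 := by
      cases x <;> cases y <;> simp [avg] at h' ⊢ <;> omega
    rw [f1, f2]
    by_cases hxy : y = true ∨ x = true
    · have hn := hn hxy
      have g1 : nx (a, k + sg x) n = (false, 0) := by simp [nx, hn.ne, hn.not_gt]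
      have g2 : em (a, k + sg x) n = wq a (k + sg x) false := by simp [em, hn.ne, hn.not_gt]
      rw [g1]
      refine ⟨by simp [Iv], ?_⟩
      by_cases hc : x = true ∧ a' = false
      · obtain ⟨rfl, rfl⟩ := hc
        obtain ⟨rfl, rfl⟩ := hI2 rfl
        rw [g2]
        simp [sg] at hI1
        have : |k'| = k' := abs_of_nonneg hI1
        have : |k' + 1| = k' + 1 := abs_of_nonneg (by omega)
        simp [wq, pd, sg, *]
        split_ifs <;> omega
      · have : wq a' (k' + sg x) false = 0 := by
          cases x <;> cases a' <;> simp [wq, sg] at * <;> omega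
        rw [this]
        have : 0 ≤ pd (a', k') x := by unfold pd; split <;> simp
        simp [pd] at *
        omega
    · have hx : x = false := by cases x <;> simp_all
      have hy : y = false := by cases y <;> simp_all
      subst hx hy
      refine ⟨by simp [Iv], ?_⟩
      have : wq a' (k' + sg false) false = 0 := by
        cases a' <;> simp [wq, sg] at * <;> omega
      rw [this]
      have : 0 ≤ pd (a', k') false := by unfold pd; split <;> simp
      simp [pd] at *
      omega
  · have hxy := hg h'
    subst hxy
    have f1 : nx (a', k' + sg x) (n + avg x x) = (a', k' + sg x) := by simp [nx, h']
    have f2 : em (a', k' + sg x) (n + avg x x) = 0 := by simp [em, h']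
    have hn : n = - sg x := by cases x <;> simp [avg, sg] at * <;> omega
    have hn0 : n ≠ 0 := by cases x <;> simp [sg] at hn <;> omega
    have hdec : decide (0 < n) = !x := by subst hn; cases x <;> simp [sg]
    have g1 : nx (a, k + sg x) n = (!x, 0) := by simp [nx, hn0, hdec]
    have g2 : em (a, k + sg x) n = wq a (k + sg x) (!x) := by simp [em, hn0, hdec]
    rw [f1, f2, g1, g2]
    refine ⟨⟨?_, ?_⟩, ?_⟩
    · cases x <;> simp [sg] at * <;> omega
    · intro h; exact ⟨h.symm, rfl⟩
    · by_cases hc : a' = !x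
      · obtain ⟨h1, rfl⟩ := hI2 hc
        subst h1
        rw [hc]
        have hab := abs_add_le k' (sg x)
        cases x <;> simp [pd, wq, sg] at * <;> omega
      · rw [g2] at e0
        simp [pd, hc]; exact e0
  · have f1 : nx (a', k' + sg x) (n + avg x y) = (true, 0) := by
      simp [nx, h'.ne', h']
    have f2 : em (a', k' + sg x) (n + avg x y) = wq a' (k' + sg x) true := by
      simp [em, h'.ne', h']
    have hn : y = false ∨ x = false → 0 < n := by
      cases x <;> cases y <;> simp [avg] at h' ⊢ <;> omega
    rw [f1, f2]
    by_cases hxy : y = false ∨ x = false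
    · have hn := hn hxy
      have g1 : nx (a, k + sg x) n = (true, 0) := by simp [nx, hn.ne', hn]
      have g2 : em (a, k + sg x) n = wq a (k + sg x) true := by simp [em, hn.ne', hn]
      rw [g1]
      refine ⟨by simp [Iv], ?_⟩
      by_cases hc : x = false ∧ a' = true
      · obtain ⟨rfl, rfl⟩ := hc
        obtain ⟨rfl, rfl⟩ := hI2 rfl
        rw [g2]
        simp [sg] at hI1
        have : |k'| = -k' := abs_of_nonpos hI1
        have : |k' + -1| = -(k' + -1) := abs_of_nonpos (by omega)
        simp [wq, pd, sg, *]
        split_ifs <;> omega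
      · have : wq a' (k' + sg x) true = 0 := by
          cases x <;> cases a' <;> simp [wq, sg] at * <;> omega
        rw [this]
        have : 0 ≤ pd (a', k') x := by unfold pd; split <;> simp
        simp [pd] at *
        omega
    · have hx : x = true := by cases x <;> simp_all
      have hy : y = true := by cases y <;> simp_all
      subst hx hy
      refine ⟨by simp [Iv], ?_⟩
      have : wq a' (k' + sg true) true = 0 := by
        cases a' <;> simp [wq, sg] at * <;> omega
      rw [this]
      have : 0 ≤ pd (a', k') true := by unfold pd; split <;> simp
      simp [pd] at *
      omega

theorem cross_step {c o : Fin 2} (hco : o ≠ c) (d e) (h : Good (sig d e) e)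
    (s s' : Bool × ℤ) (hI : Iv s s' (hd d e)) :
    Iv (st o (flat c o d) s) (st o (flat c o (sig d e)) s') e ∧
    out o wq (flat c o (sig d e)) s' + pd (st o (flat c o (sig d e)) s') e ≤
      out o wq (flat c o d) s + pd s' (hd d e) := by
  induction d generalizing s s' with
  | nil => exact ⟨hI, by simp [sig, flat, out, st, hd]⟩
  | cons p t ih =>
    obtain ⟨x, n⟩ := p
    simp only [sig, Good, hd_sig] at h
    obtain ⟨hg, ht⟩ := h
    have ih := ih ht
    simp only [sig, flat, st, out, hco.symm, if_false, hd_cons] at hI ⊢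
    generalize hd t e = y at *
    obtain ⟨a, k⟩ := s
    obtain ⟨a', k'⟩ := s'
    have hcore := cross_core x y n a k a' k' hg hI
    have := ih _ _ hcore.1
    simp only [st_nx, out_em]
    refine ⟨this.1, ?_⟩
    have := this.2
    have := hcore.2
    linarith

/-- `σ`-step for the statistic with the other marker. -/
theorem step_cross {c o : Fin 2} (hco : o ≠ c) {φ : MulAut F}
    (h1 : φ (FreeGroup.of c) = FreeGroup.of c * FreeGroup.of o)
    (h2 : φ (FreeGroup.of o) = FreeGroup.of o) {x L} (h : Rp x L) :
    ∃ L', Rp (φ x) L' ∧ stat o wq L' ≤ stat o wq L := by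
  by_cases hL : ∃ y ∈ L, y.1 = c
  · obtain ⟨d, hd1, l, m, rfl, hlm⟩ := h.sp hco hL
    have h3 := hd1.map h1 h2
    refine ⟨_, h3.rp hco, ?_⟩
    rw [stat_rot o wq l m, ← hlm]
    have hg := good_sig hd1.2.1
    generalize he : hd d true = e at *
    have hde : hd d e = e := by rw [hd_ne hd1.1 e true, he]
    by_cases hb : ∃ y ∈ flat c o (sig d e), y.1 = o
    · have p1 := cross_step hco d e hg (true, 0) (e, 0) (by simp [Iv, hde])
      have p2 := cross_step hco d e hg (st o (flat c o d) (true, 0))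
        (st o (flat c o (sig d e)) (e, 0)) (by rw [hde]; exact p1.1)
      have e1 := st_indep o _ hb (e, 0) (true, 0)
      have e2 := st_indep o _ hb (st o (flat c o (sig d e)) (true, 0)) (true, 0)
      rw [e1, e2, hde] at p2
      unfold stat
      linarith [p2.2]
    · push Not at hb
      unfold stat
      rw [out_none o _ _ hb]
      exact out_nonneg o _ wq_nonneg _ _
  · exact ⟨L, h.map_none h2 hco hL, le_rfl⟩

/-- condition on the syllables -/
def Cd : List (Bool × ℤ) → Bool → Prop
  | [], _ => True
  | p :: t, e => (p.2 ≠ 0 ∧ (p.1 = hd t e → decide (0 < p.2) = p.1)) ∧ Cd t e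

/-- number of equal adjacent signs -/
def pc (d : List (Bool × ℤ)) (e : Bool) : ℤ := sm (fun s _ t => if s = t then 1 else 0) d e

theorem pc_nonneg (d e) : 0 ≤ pc d e := by
  apply sm_nonneg
  intro s k t
  split <;> simp

theorem pc_sig (d e) : pc (sig d e) e = pc d e := by
  unfold pc
  induction d with
  | nil => rfl
  | cons p t ih => simp only [sig, sm, hd_sig, ih]

theorem sig_zero {d e} (hg : Good d e) (h : sm wq d e = 0) :
    Cd (sig d e) e ∧ sm wd d e = pc d e ∧ sm wq (sig d e) e = 0 := by
  refine ⟨?_, ?_, ?_⟩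
  · induction d with
    | nil => trivial
    | cons p t ih =>
      simp only [sm] at h
      have a1 := wq_nonneg p.1 p.2 (hd t e)
      have a2 := sm_nonneg wq wq_nonneg t e
      refine ⟨?_, ih hg.2 (by omega)⟩
      have h0 : wq p.1 p.2 (hd t e) = 0 := by omega
      have hg1 := hg.1
      simp only [hd_sig]
      clear ih h a1 a2 hg
      generalize hd t e = y at *
      obtain ⟨x, n⟩ := p
      simp only at *
      cases x <;> cases y <;> simp [wq, sg, avg] at * <;> omega
  · unfold pc
    induction d with
    | nil => rfl
    | cons p t ih =>
      simp only [sm] at h ⊢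
      have a1 := wq_nonneg p.1 p.2 (hd t e)
      have a2 := sm_nonneg wq wq_nonneg t e
      rw [ih hg.2 (by omega)]
      have h0 : wq p.1 p.2 (hd t e) = 0 := by omega
      congr 1
      clear ih h a1 a2 hg
      generalize hd t e = y at *
      obtain ⟨x, n⟩ := p
      simp only at *
      unfold wd
      rcases abs_cases n with ⟨ha, hb⟩ | ⟨ha, hb⟩ <;>
      rcases abs_cases (n + avg x y) with ⟨hc, hj⟩ | ⟨hc, hj⟩ <;>
      rw [ha, hc] <;> clear ha hc <;>
      cases x <;> cases y <;> simp [wq, sg, avg] at * <;> omega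
  · have := sm_wq_sig d e
    have := sm_nonneg wq wq_nonneg (sig d e) e
    omega

theorem out_wd {c o : Fin 2} (hco : o ≠ c) (d e) (h : Cd d e) (s : Bool) :
    (st o (flat c o d) (s, 0)).2 = 0 ∧
    2 * pc d e + sg (hd d e) * sg s - sg e * sg (st o (flat c o d) (s, 0)).1 ≤
      2 * out o wd (flat c o d) (s, 0) := by
  induction d generalizing s with
  | nil => simp [flat, st, out, pc, sm, hd]
  | cons p t ih =>
    obtain ⟨x, n⟩ := p
    have hn := h.1.1
    have hx := h.1.2
    simp only at hn hx
    have ih := ih h.2 (decide (0 < n))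
    simp only [flat, st, out, hco.symm, if_false, hd_cons, st_bl' n hn, out_bl' wd n hn]
    refine ⟨ih.1, ?_⟩
    have ih2 := ih.2
    simp only [pc, sm] at ih2 ⊢
    have w1 : wd (decide (0 < n)) 0 (decide (0 < n)) = 1 := by
      cases decide (0 < n) <;> simp [wd, avg]
    rw [w1]
    have hab : 1 ≤ |n| := Int.one_le_abs hn
    have key : 2 * (if x = hd t e then 1 else 0) + sg x * sg s ≤
        2 * wd s (0 + sg x) (decide (0 < n)) + sg (hd t e) * sg (decide (0 < n)) := by
      clear ih ih2 w1 hab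
      generalize hd t e = y at *
      generalize decide (0 < n) = z at *
      cases x <;> cases y <;> cases z <;> cases s <;> simp [sg, wd, avg] at *
    linarith

theorem map_pow_Sp {c o : Fin 2} {φ : MulAut F}
    (h1 : φ (FreeGroup.of c) = FreeGroup.of c * FreeGroup.of o)
    (h2 : φ (FreeGroup.of o) = FreeGroup.of o) {x d e} (h : Sp c o x d)
    (he : hd d true = e) (hq : sm wq d e = 0) (j : ℕ) :
    ∃ d', Sp c o ((φ ^ j) x) d' ∧ hd d' true = e ∧ sm wq d' e = 0 ∧ pc d' e = pc d e ∧
      ((flat c o d').length : ℤ) = (flat c o d).length + j * pc d e := by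
  induction j with
  | zero => exact ⟨d, by simpa using h, he, hq, rfl, by simp⟩
  | succ j ih =>
    obtain ⟨d', i1, i2, i3, i4, i5⟩ := ih
    have hm := i1.map h1 h2
    rw [i2] at hm
    obtain ⟨z1, z2, z3⟩ := sig_zero (i2 ▸ i1.2.1) i3
    refine ⟨sig d' e, ?_, by rw [hd_sig, i2], z3, by rw [pc_sig, i4], ?_⟩
    · rw [pow_succ']; exact hm
    · rw [length_sig, z2, i5, i4]; push_cast; ring

theorem final {c o : Fin 2} (hco : o ≠ c) {φ χ : MulAut F}
    (h1 : φ (FreeGroup.of c) = FreeGroup.of c * FreeGroup.of o)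
    (h2 : φ (FreeGroup.of o) = FreeGroup.of o)
    (h3 : χ (FreeGroup.of o) = FreeGroup.of o * FreeGroup.of c)
    (h4 : χ (FreeGroup.of c) = FreeGroup.of c) {x L} (h : Rp x L) (hq : stat c wq L = 0) :
    ∃ p : ℤ, (∀ j : ℕ, (cyclen ((φ ^ j) x) : ℤ) = cyclen x + j * p) ∧
      (cyclen (χ (φ x)) = cyclen (φ x) → p = 0) := by
  by_cases hL : ∃ y ∈ L, y.1 = c
  · obtain ⟨d, hd1, l, m, rfl, hlm⟩ := h.sp hco hL
    rw [stat_rot c wq l m, ← hlm, stat_flat hco _ hd1.1] at hq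
    generalize he : hd d true = e at *
    refine ⟨pc d e, ?_, ?_⟩
    · intro j
      obtain ⟨d', i1, -, -, -, i5⟩ := map_pow_Sp h1 h2 hd1 he hq j
      rw [(i1.rp hco).cyclen, (hd1.rp hco).cyclen, i5]
    · intro hc
      by_contra hp
      have hm := hd1.map h1 h2
      rw [he] at hm
      obtain ⟨z1, z2, z3⟩ := sig_zero (he ▸ hd1.2.1) hq
      rw [← pc_sig] at hp
      have hhd : hd (sig d e) e = e := by rw [hd_sig, hd_ne hd1.1 e true, he]
      generalize sig d e = f at *
      have hr := hm.rp hco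
      have hb : ∃ y ∈ flat c o f, y.1 = o := by
        cases f with
        | nil => exact absurd rfl hm.1
        | cons p t =>
          refine ⟨(o, decide (0 < p.2)), ?_, rfl⟩
          have := z1.1.1
          simp [flat, bl, this]
      obtain ⟨g, hg1, l', m', hlm', hlm2⟩ := hr.sp hco.symm hb
      have hg2 := hg1.map h3 h4
      have e1 := length_sig o c g (hd g true)
      rw [← stat_flat hco.symm _ hg1.1, hlm2, stat_rot o wd m' l', ← hlm'] at e1
      rw [(hg2.rp hco.symm).cyclen, hr.cyclen] at hc
      have e2 : (m' ++ l').length = (flat c o f).length := by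
        rw [hlm']; simp [add_comm]
      have o1 := out_wd hco f e z1 true
      have o2 := out_wd hco f e z1 (st o (flat c o f) (true, 0)).1
      have hst : ((st o (flat c o f) (true, 0)).1, (0 : ℤ)) = st o (flat c o f) (true, 0) :=
        Prod.ext rfl o1.1.symm
      rw [hst, st_indep o _ hb (st o (flat c o f) (true, 0)) (true, 0), hhd] at o2
      have o3 := o2.2
      have hpc := pc_nonneg f e
      unfold stat at e1
      have : (0 : ℤ) < pc f e := lt_of_le_of_ne hpc (Ne.symm hp)
      rw [hc, e2] at e1
      linarith
  · refine ⟨0, ?_, fun _ => rfl⟩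
    intro j
    have : Rp ((φ ^ j) x) L := by
      induction j with
      | zero => simpa using h
      | succ j ih => rw [pow_succ']; exact ih.map_none h2 hco hL
    rw [this.cyclen, h.cyclen]; simp

theorem s1 : σ (FreeGroup.of 0) = FreeGroup.of 0 * FreeGroup.of 1 := by
  simp [σ, mkAut, ga, gb]
theorem s2 : σ (FreeGroup.of 1) = FreeGroup.of 1 := by
  simp [σ, mkAut, gb]
theorem t1 : τ (FreeGroup.of 1) = FreeGroup.of 1 * FreeGroup.of 0 := by
  simp [τ, mkAut, ga, gb]
theorem t2 : τ (FreeGroup.of 0) = FreeGroup.of 0 := by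
  simp [τ, mkAut, ga]

/-- the invariant along a chain -/
def Bd (x : F) (K m : ℤ) : Prop :=
  ∃ L, Rp x L ∧ (stat 0 wq L = 0 ∨ stat 0 wq L + m ≤ K)

theorem Bd.sigma {x K m} (h : Bd x K m) (n : ℕ) : Bd ((σ ^ n) x) K (m + n) := by
  induction n with
  | zero => simpa using h
  | succ n ih =>
    obtain ⟨L, h1, h2⟩ := ih
    obtain ⟨L', h3, h4⟩ := step_same (by decide : (1 : Fin 2) ≠ 0) s1 s2 h1
    refine ⟨L', by rw [pow_succ']; exact h3, ?_⟩
    have : 0 ≤ stat 0 wq L' := out_nonneg 0 _ wq_nonneg _ _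
    push_cast
    omega

theorem Bd.tau {x K m} (h : Bd x K m) (n : ℕ) : Bd ((τ ^ n) x) K m := by
  induction n with
  | zero => simpa using h
  | succ n ih =>
    obtain ⟨L, h1, h2⟩ := ih
    obtain ⟨L', h3, h4⟩ := step_cross (by decide : (0 : Fin 2) ≠ 1) t1 t2 h1
    refine ⟨L', by rw [pow_succ']; exact h3, ?_⟩
    have : 0 ≤ stat 0 wq L' := out_nonneg 0 _ wq_nonneg _ _
    omega

theorem Bd.chain (x : F) (c : List (ℕ × ℕ)) : Bd (chainC1 c x) (cyclen x) (sigmaCount c) := by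
  induction c with
  | nil =>
    obtain ⟨L, hL⟩ := exists_Rp x
    refine ⟨L, by simpa [chainC1] using hL, Or.inr ?_⟩
    have := stat_wq_le 0 L
    rw [hL.cyclen]
    simpa [sigmaCount] using this
  | cons p t ih =>
    have h := (ih.sigma p.1).tau p.2
    have e1 : chainC1 (p :: t) x = (τ ^ p.2) ((σ ^ p.1) (chainC1 t x)) := by
      simp [chainC1]
    have e2 : (sigmaCount (p :: t) : ℤ) = sigmaCount t + p.1 := by
      simp [sigmaCount, add_comm]
    rw [e1, e2]; exact h

theorem main_one (x : F) (c : List (ℕ × ℕ)) (h : cyclen x + 1 ≤ sigmaCount c) :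
    ∃ p : ℤ, (∀ j : ℕ, (cyclen ((σ ^ j) (chainC1 c x)) : ℤ) = cyclen (chainC1 c x) + j * p) ∧
      (cyclen (τ (σ (chainC1 c x))) = cyclen (σ (chainC1 c x)) → p = 0) := by
  obtain ⟨L, h1, h2⟩ := Bd.chain x c
  have : 0 ≤ stat 0 wq L := out_nonneg 0 _ wq_nonneg _ _
  exact final (by decide : (1 : Fin 2) ≠ 0) s1 s2 t1 t2 h1 (by omega)

end Stmt10

/-- Corollary 4.5 (ii):  here `k = ‖u‖ + 1` and `ψ = σψ₁ = chainC1 ((1,0) :: c₁)`. -/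
theorem stmt10 (u v : F) (huv : cyclen v ≤ cyclen u)
    (c₁ : List (ℕ × ℕ)) (hne : c₁ ≠ []) (hσ : cyclen u + 1 ≤ sigmaCount c₁)
    (H : ∀ c' : List (ℕ × ℕ), c' ≠ [] → chainLen c' ≤ 1 + chainLen c₁ →
      ((cyclen ((σ ^ (cyclen u + 2)) (chainC1 c' u)) = cyclen ((σ ^ (cyclen u + 1)) (chainC1 c' u)) ↔
        cyclen ((σ ^ (cyclen u + 2)) (chainC1 c' v)) = cyclen ((σ ^ (cyclen u + 1)) (chainC1 c' v))) ∧
       (cyclen ((τ ^ (cyclen u + 2)) (chainC1 c' u)) = cyclen ((τ ^ (cyclen u + 1)) (chainC1 c' u)) ↔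
        cyclen ((τ ^ (cyclen u + 2)) (chainC1 c' v)) = cyclen ((τ ^ (cyclen u + 1)) (chainC1 c' v)))))
    (h : cyclen (τ ((σ * chainC1 c₁) u)) = cyclen ((σ * chainC1 c₁) u) ∨
         cyclen (τ ((σ * chainC1 c₁) v)) = cyclen ((σ * chainC1 c₁) v)) :
    cyclen (σ (chainC1 c₁ u)) = cyclen (chainC1 c₁ u) ∧
    cyclen (σ (chainC1 c₁ v)) = cyclen (chainC1 c₁ v) := by
  obtain ⟨p, hp1, hp2⟩ := Stmt10.main_one u c₁ hσ
  obtain ⟨q, hq1, hq2⟩ := Stmt10.main_one v c₁ (by omega)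
  have H1 := (H c₁ hne (by omega)).1
  have k1 := hp1 (cyclen u + 2)
  have k2 := hp1 (cyclen u + 1)
  have k3 := hq1 (cyclen u + 2)
  have k4 := hq1 (cyclen u + 1)
  have k5 := hp1 1
  have k6 := hq1 1
  rw [pow_one] at k5 k6
  push_cast at k1 k2 k3 k4 k5 k6
  have e1 : cyclen ((σ ^ (cyclen u + 2)) (chainC1 c₁ u)) =
      cyclen ((σ ^ (cyclen u + 1)) (chainC1 c₁ u)) ↔ p = 0 := by
    constructor
    · intro h'; rw [h'] at k1; linarith
    · intro h'; subst h'; simp only [mul_zero] at k1 k2; omega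
  have e2 : cyclen ((σ ^ (cyclen u + 2)) (chainC1 c₁ v)) =
      cyclen ((σ ^ (cyclen u + 1)) (chainC1 c₁ v)) ↔ q = 0 := by
    constructor
    · intro h'; rw [h'] at k3; linarith
    · intro h'; subst h'; simp only [mul_zero] at k3 k4; omega
  rw [e1, e2] at H1
  have hpq : p = 0 ∧ q = 0 := by
    rcases h with h | h
    · have := hp2 h; exact ⟨this, H1.1 this⟩
    · have := hq2 h; exact ⟨H1.2 this, this⟩
  obtain ⟨rfl, rfl⟩ := hpq
  constructor <;> omega
end
end

section
/- Let u, v be nontrivial elements of F₂ with ‖u‖ ≥ ‖v‖, and put k = ‖u‖+1. Suppose that for every chain ψ₁ of type (C1) of length at most 2‖u‖+5 one has: ‖σ^{k+1}ψ₁(u)‖ = ‖σ^{k}ψ₁(u)‖ if and only if ‖σ^{k+1}ψ₁(v)‖ = ‖σ^{k}ψ₁(v)‖, and ‖τ^{k+1}ψ₁(u)‖ = ‖τ^{k}ψ₁(u)‖ if and only if ‖τ^{k+1}ψ₁(v)‖ = ‖τ^{k}ψ₁(v)‖; and that for every chain ψ₂ of type (C2) of length at most 2‖u‖+5 one has: ‖σ^{-k-1}ψ₂(u)‖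 = ‖σ^{-k}ψ₂(u)‖ if and only if ‖σ^{-k-1}ψ₂(v)‖ = ‖σ^{-k}ψ₂(v)‖, and ‖τ^{-k-1}ψ₂(u)‖ = ‖τ^{-k}ψ₂(u)‖ if and only if ‖τ^{-k-1}ψ₂(v)‖ = ‖τ^{-k}ψ₂(v)‖. Then u and v are boundedly translation equivalent in F₂, i.e., there exists a real C > 0 such that ‖φ(u)‖ ≤ C·‖φ(v)‖ and ‖φ(v)‖ ≤ C·‖φ(u)‖ for every automorphism φ of F₂. -/
noncomputable section

open FreeGroup in
/-- count of letters with index `i` in the cyclic reduction. -/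
def cyc (i : Fin 2) (y : F) : ℕ := (reduceCyclically y.toWord).countP (fun p => p.1 = i)

def cnt (i : Fin 2) (y : F) : ℕ := y.toWord.countP (fun p => p.1 = i)

lemma cnt_mul_le (i : Fin 2) (x y : F) : cnt i (x * y) ≤ cnt i x + cnt i y := by
  have := (FreeGroup.toWord_mul_sublist x y).countP_le (p := fun p => p.1 = i)
  simpa [cnt, List.countP_append] using this

lemma countP_invRev (i : Fin 2) (L : List (Fin 2 × Bool)) :
    (FreeGroup.invRev L).countP (fun p => p.1 = i) = L.countP (fun p => p.1 = i) := by
  simp only [FreeGroup.invRev, List.countP_reverse, List.countP_map]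
  rfl

lemma countP_flatten_replicate (i : Fin 2) (n : ℕ) (L : List (Fin 2 × Bool)) :
    (List.replicate n L).flatten.countP (fun p => p.1 = i) = n * L.countP (fun p => p.1 = i) := by
  induction n with
  | zero => simp
  | succ n ih => rw [List.replicate_succ, List.flatten_cons, List.countP_append, ih]; ring

open FreeGroup in
lemma cnt_pow (i : Fin 2) (x : F) (n : ℕ) :
    cnt i (x ^ (n + 1)) = (n + 1) * cyc i x +
      2 * (reduceCyclically.conjugator x.toWord).countP (fun p => p.1 = i) := by
  unfold cnt cyc
  rw [toWord_pow, reduceCyclically.reduce_flatten_replicate_succ isReduced_toWord,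
    List.countP_append, List.countP_append, countP_invRev, countP_flatten_replicate]
  ring

lemma cnt_inv (i : Fin 2) (x : F) : cnt i x⁻¹ = cnt i x := by
  unfold cnt; rw [FreeGroup.toWord_inv, countP_invRev]

lemma cyc_conj_le (i : Fin 2) (g x : F) : cyc i (g * x * g⁻¹) ≤ cyc i x := by
  by_contra h
  push Not at h
  set K := 2 * (FreeGroup.reduceCyclically.conjugator x.toWord).countP (fun p => p.1 = i) with hK
  have key : ∀ n : ℕ, (n + 1) * cyc i (g * x * g⁻¹) ≤ (n + 1) * cyc i x + K + 2 * cnt i g := by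
    intro n
    have h1 := cnt_pow i (g * x * g⁻¹) n
    have h2 := cnt_pow i x n
    have h3 : (g * x * g⁻¹) ^ (n + 1) = g * x ^ (n + 1) * g⁻¹ := by rw [conj_pow]
    rw [h3] at h1
    have h4 := cnt_mul_le i (g * x ^ (n + 1)) g⁻¹
    have h5 := cnt_mul_le i g (x ^ (n + 1))
    rw [cnt_inv] at h4
    omega
  have := key (K + 2 * cnt i g)
  nlinarith

lemma cyc_conj (i : Fin 2) (g x : F) : cyc i (g * x * g⁻¹) = cyc i x := by
  apply le_antisymm (cyc_conj_le i g x)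
  have := cyc_conj_le i g⁻¹ (g * x * g⁻¹)
  have e : g⁻¹ * (g * x * g⁻¹) * g⁻¹⁻¹ = x := by group
  rwa [e] at this

open FreeGroup in
lemma reduceCyclically_eq {L : List (Fin 2 × Bool)} (h : IsCyclicallyReduced L) :
    reduceCyclically L = L := by
  induction L using List.bidirectionalRec with
  | nil => simp
  | singleton a => simp
  | cons_append a l b ih =>
    rw [reduceCyclically.cons_append, if_neg]
    · simp
    · rintro ⟨h1, h2⟩
      have := (isCyclicallyReduced_cons_append_iff.1 (by simpa using h)).2 h1
      rw [this] at h2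
      simp at h2

open FreeGroup in
lemma cyc_mk (i : Fin 2) {L : List (Fin 2 × Bool)} (h : IsCyclicallyReduced L) :
    cyc i (mk L) = L.countP (fun p => p.1 = i) := by
  unfold cyc
  rw [toWord_mk, h.isReduced.reduce_eq, reduceCyclically_eq h]

open FreeGroup in
lemma exists_cycred (y : F) : ∃ g : F, ∃ L, IsCyclicallyReduced L ∧ y = g * mk L * g⁻¹ := by
  refine ⟨mk (reduceCyclically.conjugator y.toWord), reduceCyclically y.toWord,
    reduceCyclically.isCyclicallyReduced isReduced_toWord, ?_⟩
  rw [inv_mk, mul_mk, mul_mk, reduceCyclically.conj_conjugator_reduceCyclically, mk_toWord]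

lemma length_eq_count (L : List (Fin 2 × Bool)) :
    L.length = L.countP (fun p => p.1 = 0) + L.countP (fun p => p.1 = 1) := by
  induction L with
  | nil => simp
  | cons a l ih =>
    obtain ⟨i, s⟩ := a
    fin_cases i <;> simp [ih] <;> omega

open FreeGroup in
lemma cyc_le_len (y : F) : cyc 0 y + cyc 1 y ≤ len y := by
  unfold cyc len
  rw [← length_eq_count]
  conv_rhs => rw [← reduceCyclically.conj_conjugator_reduceCyclically y.toWord]
  simp only [List.length_append]
  omega

open FreeGroup in
lemma cyclen_eq (y : F) : cyclen y = cyc 0 y + cyc 1 y := by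
  unfold cyclen
  apply le_antisymm
  · obtain ⟨g, L, hL, rfl⟩ := exists_cycred y
    apply Nat.sInf_le
    refine ⟨g⁻¹, ?_⟩
    rw [cyc_conj, cyc_conj, cyc_mk _ hL, cyc_mk _ hL, ← length_eq_count]
    have : g⁻¹ * (g * mk L * g⁻¹) * g⁻¹⁻¹ = mk L := by group
    rw [this, len, toWord_mk, hL.isReduced.reduce_eq]
  · refine le_csInf ⟨len (1 * y * 1⁻¹), 1, rfl⟩ ?_
    rintro n ⟨g, rfl⟩
    have := cyc_le_len (g * y * g⁻¹)
    rwa [cyc_conj, cyc_conj] at this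

open FreeGroup in
lemma cyclen_pos {y : F} (h : y ≠ 1) : 0 < cyclen y := by
  rw [cyclen_eq]
  by_contra hc
  apply h
  obtain ⟨g, L, hL, rfl⟩ := exists_cycred y
  rw [cyc_conj, cyc_conj, cyc_mk _ hL, cyc_mk _ hL, ← length_eq_count] at hc
  have : L = [] := by
    apply List.eq_nil_of_length_eq_zero; omega
  subst this
  have : (mk [] : F) = 1 := rfl
  rw [this]; group

lemma cyclen_conj (g x : F) : cyclen (g * x * g⁻¹) = cyclen x := by
  rw [cyclen_eq, cyclen_eq, cyc_conj, cyc_conj]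

/-- equality modulo inner automorphisms -/
def OutEq (φ ψ : MulAut F) : Prop := ∃ g : F, φ = MulAut.conj g * ψ

lemma OutEq.refl (φ : MulAut F) : OutEq φ φ := ⟨1, by simp⟩

lemma OutEq.symm {φ ψ : MulAut F} (h : OutEq φ ψ) : OutEq ψ φ := by
  obtain ⟨g, rfl⟩ := h
  exact ⟨g⁻¹, by rw [← mul_assoc, ← map_mul]; simp⟩

lemma OutEq.trans {φ ψ χ : MulAut F} (h : OutEq φ ψ) (h' : OutEq ψ χ) : OutEq φ χ := by
  obtain ⟨g, rfl⟩ := h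
  obtain ⟨g', rfl⟩ := h'
  exact ⟨g * g', by rw [map_mul, mul_assoc]⟩

lemma OutEq.mul {φ ψ φ' ψ' : MulAut F} (h : OutEq φ ψ) (h' : OutEq φ' ψ') :
    OutEq (φ * φ') (ψ * ψ') := by
  obtain ⟨g, rfl⟩ := h
  obtain ⟨g', rfl⟩ := h'
  refine ⟨g * ψ g', ?_⟩
  ext1 x
  simp [MulAut.mul_apply, MulAut.conj_apply, mul_assoc]

lemma OutEq.inv {φ ψ : MulAut F} (h : OutEq φ ψ) : OutEq φ⁻¹ ψ⁻¹ := by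
  have h1 := ((OutEq.refl φ⁻¹).mul h).mul (OutEq.refl ψ⁻¹)
  simp only [inv_mul_cancel, one_mul, mul_assoc, mul_inv_cancel, mul_one] at h1
  exact h1.symm

lemma OutEq.cyc {φ ψ : MulAut F} (h : OutEq φ ψ) (i : Fin 2) (y : F) :
    cyc i (φ y) = cyc i (ψ y) := by
  obtain ⟨g, rfl⟩ := h
  rw [MulAut.mul_apply, MulAut.conj_apply, cyc_conj]

lemma OutEq.cyclen {φ ψ : MulAut F} (h : OutEq φ ψ) (y : F) :
    cyclen (φ y) = cyclen (ψ y) := by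
  rw [cyclen_eq, cyclen_eq, h.cyc, h.cyc]

/-- signed permutation automorphisms permute letter counts -/
lemma cyc_signed (β : MulAut F) (p : Fin 2 → Fin 2) (hp : Function.Injective p) (e : Fin 2 → Bool)
    (h : ∀ i, β (FreeGroup.of i) = FreeGroup.mk [(p i, e i)]) (i : Fin 2) (y : F) :
    cyc (p i) (β y) = cyc i y := by
  have key : ∀ L : List (Fin 2 × Bool), β (FreeGroup.mk L) =
      FreeGroup.mk (L.map (fun q => (p q.1, if q.2 then e q.1 else !(e q.1)))) := by
    intro L
    induction L with
    | nil => exact map_one β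
    | cons q L ih =>
      have e1 : (FreeGroup.mk (q :: L) : F) = FreeGroup.mk [q] * FreeGroup.mk L := by
        rw [FreeGroup.mul_mk]; rfl
      rw [e1, map_mul, ih, List.map_cons]
      have e2 : β (FreeGroup.mk [q]) =
          FreeGroup.mk [(p q.1, if q.2 then e q.1 else !(e q.1))] := by
        obtain ⟨j, s⟩ := q
        cases s
        · have : (FreeGroup.mk [(j, false)] : F) = (FreeGroup.of j)⁻¹ := by
            simp [FreeGroup.of, FreeGroup.inv_mk, FreeGroup.invRev]
          rw [this, map_inv, h]
          simp [FreeGroup.inv_mk, FreeGroup.invRev]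
        · exact h j
      rw [e2, FreeGroup.mul_mk]; rfl
  obtain ⟨g, L, hL, rfl⟩ := exists_cycred y
  rw [map_mul, map_mul, map_inv, cyc_conj, cyc_conj, key, cyc_mk _ hL]
  rw [cyc_mk]
  · rw [List.countP_map]
    congr 1
    ext q
    simp [hp.eq_iff]
  · refine ⟨?_, ?_⟩
    · have := hL.1
      unfold FreeGroup.IsReduced at this ⊢
      rw [List.isChain_map]
      refine this.imp ?_
      intro a b hab hab'
      have h1 := hp hab'
      have h2 := hab h1
      simp only [h1, h2]
    · intro a ha b hb hab
      rw [List.getLast?_map] at ha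
      rw [List.head?_map] at hb
      simp only [Option.mem_def, Option.map_eq_some_iff] at ha hb
      obtain ⟨a, ha, rfl⟩ := ha
      obtain ⟨b, hb, rfl⟩ := hb
      have h1 := hp hab
      have h2 := hL.2 a ha b hb h1
      simp only [h1, h2]

lemma mkAut_ga (x y xi yi : F) (h1) (h2) (h3) (h4) : mkAut x y xi yi h1 h2 h3 h4 ga = x := by
  simp [mkAut, MonoidHom.toMulEquiv, ga]

lemma mkAut_gb (x y xi yi : F) (h1) (h2) (h3) (h4) : mkAut x y xi yi h1 h2 h3 h4 gb = y := by
  simp [mkAut, MonoidHom.toMulEquiv, gb]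

@[simp] lemma σ_ga : σ ga = ga * gb := mkAut_ga ..
@[simp] lemma σ_gb : σ gb = gb := mkAut_gb ..
@[simp] lemma τ_ga : τ ga = ga := mkAut_ga ..
@[simp] lemma τ_gb : τ gb = gb * ga := mkAut_gb ..
@[simp] lemma pi'_ga : pi' ga = gb := mkAut_ga ..
@[simp] lemma pi'_gb : pi' gb = ga⁻¹ := mkAut_gb ..

lemma aut_ext {φ ψ : MulAut F} (h1 : φ ga = ψ ga) (h2 : φ gb = ψ gb) : φ = ψ := by
  have : φ.toMonoidHom = ψ.toMonoidHom := by
    ext i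
    fin_cases i
    · exact h1
    · exact h2
  ext x
  exact DFunLike.congr_fun this x

lemma σz_ga (n : ℤ) : (σ ^ n) ga = ga * gb ^ n := by
  induction n using Int.induction_on with
  | zero => simp
  | succ n ih =>
    rw [zpow_add_one, MulAut.mul_apply, σ_ga, map_mul, ih]
    have : (σ ^ (n : ℤ)) gb = gb := by
      clear ih
      induction n with
      | zero => simp
      | succ n ih => push_cast; rw [zpow_add_one, MulAut.mul_apply, σ_gb, ih]
    rw [this, zpow_add_one, mul_assoc]
  | pred n ih =>
    have e1 : σ⁻¹ ga = ga * gb⁻¹ := by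
      rw [MulAut.inv_apply, MulEquiv.symm_apply_eq]; simp
    have e2 : σ⁻¹ gb = gb := by
      rw [MulAut.inv_apply, MulEquiv.symm_apply_eq]; simp
    rw [zpow_sub_one, MulAut.mul_apply, e1, map_mul, ih, map_inv]
    have : (σ ^ (-n : ℤ)) gb = gb := by
      clear ih
      induction n with
      | zero => simp
      | succ n ih =>
        push_cast
        rw [neg_add, ← sub_eq_add_neg, zpow_sub_one, MulAut.mul_apply, e2, ih]
    rw [this, zpow_sub_one, mul_assoc]

lemma σz_gb (n : ℤ) : (σ ^ n) gb = gb := by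
  induction n using Int.induction_on with
  | zero => simp
  | succ n ih => rw [zpow_add_one, MulAut.mul_apply, σ_gb, ih]
  | pred n ih =>
    have e2 : σ⁻¹ gb = gb := by
      rw [MulAut.inv_apply, MulEquiv.symm_apply_eq]; simp
    rw [zpow_sub_one, MulAut.mul_apply, e2, ih]

/-- signed generator -/
def sgn (e : Bool) : F := if e then ga else ga⁻¹

def sval : List (Bool × ℤ) → F
  | [] => 1
  | p :: l => sgn p.1 * gb ^ p.2 * sval l

def ns : List (Bool × ℤ) → Bool → Bool
  | [], e => e
  | p :: _, _ => p.1

def eta (e e' : Bool) : ℤ := if e = e' then (if e then 1 else -1) else 0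

def strn (n : ℤ) : List (Bool × ℤ) → Bool → List (Bool × ℤ)
  | [], _ => []
  | p :: l, e => (p.1, p.2 + n * eta p.1 (ns l e)) :: strn n l e

def sent : List (Bool × ℤ) → Bool → List (ℤ × ℤ)
  | [], _ => []
  | p :: l, e => (p.2, eta p.1 (ns l e)) :: sent l e

def sgood : List (Bool × ℤ) → Bool → Prop
  | [], _ => True
  | p :: l, e => (p.1 ≠ ns l e → p.2 ≠ 0) ∧ sgood l e

def bw (m : ℤ) : List (Fin 2 × Bool) := List.replicate m.natAbs (1, decide (0 ≤ m))

def wl : List (Bool × ℤ) → List (Fin 2 × Bool)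
  | [] => []
  | p :: l => (0, p.1) :: (bw p.2 ++ wl l)

lemma ns_strn (n : ℤ) (l e) : ns (strn n l e) e = ns l e := by
  cases l <;> rfl

lemma length_strn (n : ℤ) (l e) : (strn n l e).length = l.length := by
  induction l with
  | nil => rfl
  | cons p l ih => simp [strn, ih]

lemma length_sent (l e) : (sent l e).length = l.length := by
  induction l with
  | nil => rfl
  | cons p l ih => simp [sent, ih]

lemma sgood_strn (n : ℤ) (l e) (h : sgood l e) : sgood (strn n l e) e := by
  induction l with
  | nil => trivial
  | cons p l ih =>
    refine ⟨?_, ih h.2⟩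
    rw [ns_strn]
    intro h1
    simp only [eta, if_neg h1, mul_zero, add_zero]
    exact h.1 h1

def corr (n : ℤ) (e : Bool) : F := if e then 1 else gb ^ (-n)

lemma sigma_sval (n : ℤ) (l : List (Bool × ℤ)) (e : Bool) :
    (σ ^ n) (sval l) * corr n e = corr n (ns l e) * sval (strn n l e) := by
  induction l with
  | nil => simp [sval, ns, strn]
  | cons p l ih =>
    obtain ⟨s, m⟩ := p
    have hns : ns ((s, m) :: l) e = s := rfl
    simp only [sval, hns, strn, map_mul, map_zpow, σz_gb, mul_assoc, ih]
    clear ih hns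
    generalize ns l e = t
    cases s <;> cases t <;>
      simp only [sgn, σz_ga, corr, eta, map_inv, if_true, if_false, Bool.false_eq_true,
        reduceCtorEq, mul_one, mul_zero, add_zero, one_mul, mul_neg, zpow_add, mul_inv_rev,
        mul_assoc, zpow_neg] <;> group

lemma mk_bw (m : ℤ) : FreeGroup.mk (bw m) = gb ^ m := by
  unfold bw
  rcases le_total 0 m with h | h
  · lift m to ℕ using h
    simp only [Int.natAbs_natCast, Int.natCast_nonneg, decide_true, zpow_natCast]
    induction m with
    | zero => rfl
    | succ m ih =>
      rw [List.replicate_succ, pow_succ', ← ih]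
      simp [gb, FreeGroup.of]
  · obtain ⟨k, rfl⟩ : ∃ k : ℕ, m = -k := ⟨m.natAbs, by omega⟩
    simp only [Int.natAbs_neg, Int.natAbs_natCast, zpow_neg, zpow_natCast]
    cases k with
    | zero => rfl
    | succ k =>
      have : decide (0 ≤ -((k + 1 : ℕ) : ℤ)) = false := by simp; omega
      rw [this]
      generalize k + 1 = j
      induction j with
      | zero => rfl
      | succ m ih =>
        rw [List.replicate_succ, pow_succ, mul_inv_rev, ← ih]
        simp [gb, FreeGroup.of, FreeGroup.inv_mk, FreeGroup.invRev]

lemma mk_wl (l : List (Bool × ℤ)) : FreeGroup.mk (wl l) = sval l := by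
  induction l with
  | nil => rfl
  | cons p l ih =>
    rw [wl, sval, ← ih, ← mk_bw]
    have : sgn p.1 = FreeGroup.mk [(0, p.1)] := by
      cases p.1 <;> simp [sgn, ga, FreeGroup.of, FreeGroup.inv_mk, FreeGroup.invRev]
    rw [this, FreeGroup.mul_mk, FreeGroup.mul_mk]
    simp

lemma red_rep (k : ℕ) (t s : Bool) (R : List (Fin 2 × Bool))
    (h : FreeGroup.IsReduced ((0, s) :: R)) :
    FreeGroup.IsReduced (List.replicate k (1, t) ++ (0, s) :: R) := by
  induction k with
  | zero => simpa using h
  | succ k ih =>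
    cases k with
    | zero =>
      simp only [List.replicate_succ, List.replicate_zero, List.cons_append, List.nil_append]
      exact List.isChain_cons_cons.2 ⟨by simp, h⟩
    | succ k =>
      simp only [List.replicate_succ, List.cons_append] at ih ⊢
      exact List.isChain_cons_cons.2 ⟨by simp, ih⟩

lemma red_wl (l : List (Bool × ℤ)) (e : Bool) (h : sgood l e) :
    FreeGroup.IsReduced (wl l ++ [(0, e)]) ∧ ∃ R, wl l ++ [(0, e)] = (0, ns l e) :: R := by
  induction l with
  | nil => exact ⟨by simp [wl], [], rfl⟩
  | cons p l ih =>
    obtain ⟨h1, R, hR⟩ := ih h.2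
    refine ⟨?_, _, rfl⟩
    obtain ⟨s, m⟩ := p
    simp only [wl, List.cons_append, List.append_assoc]
    rw [hR] at h1 ⊢
    have h2 := h.1
    simp only at h2
    unfold bw
    rcases hm : m.natAbs with _ | k
    · simp only [List.replicate_zero, List.nil_append]
      refine List.isChain_cons_cons.2 ⟨?_, h1⟩
      intro _
      by_contra h3
      exact h2 h3 (by omega)
    · have := red_rep (k + 1) (decide (0 ≤ m)) _ _ h1
      simp only [List.replicate_succ, List.cons_append] at this ⊢
      exact List.isChain_cons_cons.2 ⟨by simp, this⟩

lemma cycred_wl (l : List (Bool × ℤ)) (e : Bool) (h : sgood l e) (he : ns l e = e) :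
    FreeGroup.IsCyclicallyReduced (wl l) := by
  obtain ⟨h1, _⟩ := red_wl l e h
  have h2 := List.isChain_append.1 h1
  refine ⟨h2.1, ?_⟩
  intro a ha b hb
  have h3 := h2.2.2 a ha (0, e) (by simp)
  cases l with
  | nil => simp [wl] at ha
  | cons p l =>
    simp only [wl, List.head?_cons, Option.mem_def, Option.some.injEq] at hb
    simp only [ns] at he
    subst hb; subst he
    exact h3

lemma count0_wl (l : List (Bool × ℤ)) : (wl l).countP (fun p => p.1 = 0) = l.length := by
  induction l with
  | nil => rfl
  | cons p l ih => simp [wl, bw, List.countP_replicate, List.countP_append, ih]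

lemma count1_wl (l : List (Bool × ℤ)) :
    (((wl l).countP (fun p => p.1 = 1) : ℕ) : ℤ) = (l.map fun p => |p.2|).sum := by
  induction l with
  | nil => rfl
  | cons p l ih => simp [wl, bw, List.countP_replicate, List.countP_append, ih]

lemma sum_strn (n : ℤ) (l e) : ((strn n l e).map fun p => |p.2|).sum =
    ((sent l e).map fun p => |p.1 + n * p.2|).sum := by
  induction l with
  | nil => rfl
  | cons p l ih => simp [strn, sent, ih]

lemma sent_prop (l e) (h : sgood l e) : ∀ p ∈ sent l e,
    (p.2 = 1 ∨ p.2 = -1 ∨ (p.2 = 0 ∧ p.1 ≠ 0)) := by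
  induction l with
  | nil => simp [sent]
  | cons p l ih =>
    intro q hq
    simp only [sent, List.mem_cons] at hq
    rcases hq with rfl | hq
    · simp only [eta]
      split_ifs with h1 h2
      · simp
      · simp
      · right; right; exact ⟨rfl, h.1 h1⟩
    · exact ih h.2 q hq

lemma exists_sval (y : F) : ∃ (k : ℤ) (l : List (Bool × ℤ)), y = gb ^ k * sval l := by
  rw [← FreeGroup.mk_toWord (x := y)]
  induction y.toWord with
  | nil => exact ⟨0, [], by simp [sval]; rfl⟩
  | cons q L ih =>
    obtain ⟨k, l, h⟩ := ih
    have e1 : (FreeGroup.mk (q :: L) : F) = FreeGroup.mk [q] * FreeGroup.mk L := by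
      rw [FreeGroup.mul_mk]; rfl
    rw [e1, h]
    obtain ⟨i, s⟩ := q
    fin_cases i
    · refine ⟨0, (s, k) :: l, ?_⟩
      have : sgn s = FreeGroup.mk [(0, s)] := by
        cases s <;> simp [sgn, ga, FreeGroup.of, FreeGroup.inv_mk, FreeGroup.invRev]
      simp [sval, this, mul_assoc]
    · refine ⟨(if s then 1 else -1) + k, l, ?_⟩
      have : FreeGroup.mk [(1, s)] = gb ^ (if s then (1 : ℤ) else -1) := by
        cases s <;> simp [gb, FreeGroup.of, FreeGroup.inv_mk, FreeGroup.invRev]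
      rw [zpow_add, mul_assoc, ← this]; rfl

lemma sval_mid (l1 l2 : List (Bool × ℤ)) (m : ℤ) : ∃ (k : ℤ) (l : List (Bool × ℤ)),
    l.length = l1.length + l2.length ∧ sval l1 * gb ^ m * sval l2 = gb ^ k * sval l := by
  induction l1 with
  | nil => exact ⟨m, l2, by simp, by simp [sval]⟩
  | cons p l1 ih =>
    obtain ⟨k, l, h1, h2⟩ := ih
    refine ⟨0, (p.1, p.2 + k) :: l, by simp [h1]; omega, ?_⟩
    simp only [sval, mul_assoc, zpow_zero, one_mul, zpow_add] at h2 ⊢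
    rw [h2]

lemma sval_append (l1 l2 : List (Bool × ℤ)) : sval (l1 ++ l2) = sval l1 * sval l2 := by
  induction l1 with
  | nil => simp [sval]
  | cons p l1 ih => simp [sval, ih, mul_assoc]

lemma exists_bad (l e) (h : ¬ sgood l e) : ∃ l1 s l2, l = l1 ++ (s, 0) :: l2 ∧ ns l2 e = !s := by
  induction l with
  | nil => exact absurd trivial h
  | cons p l ih =>
    by_cases h1 : sgood l e
    · have : ¬ (p.1 ≠ ns l e → p.2 ≠ 0) := fun hh => h ⟨hh, h1⟩
      push Not at this
      obtain ⟨a, b⟩ := this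
      refine ⟨[], p.1, l, by rw [← b]; rfl, ?_⟩
      revert a; cases p.1 <;> cases ns l e <;> simp
    · obtain ⟨l1, s, l2, rfl, h2⟩ := ih h1
      exact ⟨p :: l1, s, l2, rfl, h2⟩

lemma sgn_not (s : Bool) : sgn s * sgn (!s) = 1 := by cases s <;> simp [sgn]

lemma exists_good (y : F) : (∃ m : ℤ, IsConj y (gb ^ m)) ∨
    ∃ l e, sgood l e ∧ ns l e = e ∧ IsConj y (sval l) := by
  classical
  let P : ℕ → Prop := fun N => ∃ (k : ℤ) (l : List (Bool × ℤ)), l.length = N ∧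
    IsConj y (gb ^ k * sval l)
  have hP : ∃ N, P N := by
    obtain ⟨k, l, h⟩ := exists_sval y
    exact ⟨_, k, l, rfl, by rw [← h]⟩
  obtain ⟨k, l, hl, hc⟩ := Nat.find_spec hP
  have hmin : ∀ (k' : ℤ) (l' : List (Bool × ℤ)), IsConj y (gb ^ k' * sval l') →
      l.length ≤ l'.length := by
    intro k' l' h'
    rw [hl]
    exact Nat.find_min' hP ⟨k', l', rfl, h'⟩
  rcases l.eq_nil_or_concat with rfl | ⟨l0, p, rfl⟩
  · left; exact ⟨k, by simpa [sval] using hc⟩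
  right
  rw [List.concat_eq_append] at *
  set l' := l0 ++ [(p.1, p.2 + k)] with hl'
  have hc' : IsConj y (sval l') := by
    refine hc.trans ?_
    refine isConj_iff.2 ⟨gb ^ (-k), ?_⟩
    simp only [hl', sval_append, sval, mul_assoc, zpow_neg, inv_mul_cancel_left, inv_inv, mul_one,
      zpow_add]
  have hlen : l'.length = (l0 ++ [p]).length := by simp [hl']
  rw [← hlen] at hmin
  clear_value l'
  have hne : l' ≠ [] := by rintro rfl; simp at hlen
  obtain ⟨q, r, rfl⟩ := List.exists_cons_of_ne_nil hne
  refine ⟨q :: r, q.1, ?_, rfl, hc'⟩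
  by_contra hbad
  obtain ⟨l1, s, l2, h1, h2⟩ := exists_bad _ _ hbad
  rw [h1] at hmin hc'
  cases l2 with
  | cons p2 l3 =>
    simp only [ns] at h2
    obtain ⟨k', l', e1, e2⟩ := sval_mid l1 l3 p2.2
    have : IsConj y (gb ^ k' * sval l') := by
      rw [← e2]
      convert hc' using 1
      simp only [sval_append, sval, h2, zpow_zero, mul_one, mul_assoc]
      rw [← mul_assoc (sgn s), sgn_not, one_mul]
    have := hmin _ _ this
    simp at this
    omega
  | nil =>
    simp only [ns] at h2
    cases l1 with
    | nil =>
      simp only [List.nil_append, List.cons.injEq] at h1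
      rw [h1.1] at h2
      cases s <;> simp at h2
    | cons p1 l1 =>
      simp only [List.cons_append, List.cons.injEq] at h1
      rw [h1.1] at h2
      have : IsConj y (gb ^ p1.2 * sval l1) := by
        refine hc'.trans (isConj_iff.2 ⟨sgn s, ?_⟩)
        have hs : sgn p1.1 = (sgn s)⁻¹ := by
          rw [h2]; exact (inv_eq_of_mul_eq_one_right (sgn_not s)).symm
        simp only [List.cons_append, sval, sval_append, zpow_zero, mul_one, hs]
        group
      have := hmin _ _ this
      simp at this

lemma IsConj.cyc_eq {x y : F} (h : IsConj x y) (i : Fin 2) : cyc i x = cyc i y := by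
  obtain ⟨c, rfl⟩ := isConj_iff.1 h
  rw [cyc_conj]

lemma isConj_map {x y : F} (h : IsConj x y) (φ : MulAut F) : IsConj (φ x) (φ y) := by
  obtain ⟨c, rfl⟩ := isConj_iff.1 h
  exact isConj_iff.2 ⟨φ c, by simp⟩

lemma cycred_bw (m : ℤ) : FreeGroup.IsCyclicallyReduced (bw m) := by
  unfold bw
  refine ⟨?_, ?_⟩
  · apply List.isChain_replicate_of_rel; simp
  · intro a ha b hb _
    have h1 := List.eq_of_mem_replicate (List.mem_of_getLast? ha)
    have h2 := List.eq_of_mem_replicate (List.mem_of_head? hb)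
    rw [h1, h2]

lemma syll (y : F) : ∃ (c : ℤ) (T : List (ℤ × ℤ)), 0 ≤ c ∧ T.length = cyc 0 y ∧
    (∀ p ∈ T, (p.2 = 1 ∨ p.2 = -1 ∨ (p.2 = 0 ∧ p.1 ≠ 0))) ∧
    ∀ n : ℤ, cyc 0 ((σ ^ n) y) = cyc 0 y ∧
      (cyc 1 ((σ ^ n) y) : ℤ) = c + (T.map fun p => |p.1 + n * p.2|).sum := by
  rcases exists_good y with ⟨m, h⟩ | ⟨l, e, hg, he, h⟩
  · have h0 : cyc 0 (gb ^ m) = 0 := by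
      rw [← mk_bw, cyc_mk _ (cycred_bw m)]; simp [bw, List.countP_replicate]
    have h1 : cyc 1 (gb ^ m) = m.natAbs := by
      rw [← mk_bw, cyc_mk _ (cycred_bw m)]; simp [bw, List.countP_replicate]
    refine ⟨m.natAbs, [], by omega, ?_, by simp, ?_⟩
    · rw [h.cyc_eq, h0]; rfl
    · intro n
      have hn := isConj_map h (σ ^ n)
      rw [map_zpow, σz_gb] at hn
      rw [hn.cyc_eq, hn.cyc_eq, h.cyc_eq, h1]
      simp
  · have key : ∀ n : ℤ, IsConj ((σ ^ n) y) (FreeGroup.mk (wl (strn n l e))) := by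
      intro n
      refine (isConj_map h (σ ^ n)).trans ?_
      have := sigma_sval n l e
      rw [he] at this
      rw [mk_wl]
      refine isConj_iff.2 ⟨(corr n e)⁻¹, ?_⟩
      rw [inv_inv, mul_assoc, this]; simp
    have kc : ∀ n : ℤ, FreeGroup.IsCyclicallyReduced (wl (strn n l e)) := fun n =>
      cycred_wl _ e (sgood_strn n l e hg) (by rw [ns_strn, he])
    have k0 : ∀ n : ℤ, cyc 0 ((σ ^ n) y) = l.length := by
      intro n
      rw [(key n).cyc_eq, cyc_mk _ (kc n), count0_wl, length_strn]
    have k00 : cyc 0 y = l.length := by simpa using k0 0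
    refine ⟨0, sent l e, le_rfl, by rw [length_sent, k00], sent_prop l e hg, ?_⟩
    intro n
    refine ⟨by rw [k0, k00], ?_⟩
    rw [(key n).cyc_eq, cyc_mk _ (kc n), count1_wl, sum_strn, zero_add]

def fA (y : F) : ℤ := cyc 0 y
def fB (y : F) : ℤ := cyc 1 y

lemma fA_nonneg (y : F) : 0 ≤ fA y := by unfold fA; omega
lemma fB_nonneg (y : F) : 0 ≤ fB y := by unfold fB; omega

/-- swap of the generators -/
def swp : MulAut F := mkAut gb ga gb ga
  (by simp [ga, gb]) (by simp [ga, gb]) (by simp [ga, gb]) (by simp [ga, gb])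
/-- inversion of the second generator -/
def iot : MulAut F := mkAut ga gb⁻¹ ga gb⁻¹
  (by simp [ga, gb]) (by simp [ga, gb]) (by simp [ga, gb]) (by simp [ga, gb])

@[simp] lemma swp_ga : swp ga = gb := mkAut_ga ..
@[simp] lemma swp_gb : swp gb = ga := mkAut_gb ..
@[simp] lemma iot_ga : iot ga = ga := mkAut_ga ..
@[simp] lemma iot_gb : iot gb = gb⁻¹ := mkAut_gb ..

lemma mk_inv_of (i : Fin 2) : (FreeGroup.mk [(i, false)] : F) = (FreeGroup.of i)⁻¹ := by
  simp [FreeGroup.of, FreeGroup.inv_mk, FreeGroup.invRev]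

lemma cyc_swp (i : Fin 2) (y : F) : cyc (1 - i) (swp y) = cyc i y := by
  refine cyc_signed swp (fun i => 1 - i) (by decide) (fun _ => true) ?_ i y
  intro i
  fin_cases i
  · exact swp_ga
  · exact swp_gb

lemma cyc_iot (i : Fin 2) (y : F) : cyc i (iot y) = cyc i y := by
  refine cyc_signed iot (fun i => i) (by decide) ![true, false] ?_ i y
  intro i
  fin_cases i
  · exact iot_ga
  · exact iot_gb.trans (mk_inv_of 1).symm

lemma cyc_pi (i : Fin 2) (y : F) : cyc (1 - i) (pi' y) = cyc i y := by
  refine cyc_signed pi' (fun i => 1 - i) (by decide) ![true, false] ?_ i y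
  intro i
  fin_cases i
  · exact pi'_ga
  · exact pi'_gb.trans (mk_inv_of 0).symm

lemma fA_swp (y : F) : fA (swp y) = fB y := congrArg Nat.cast (cyc_swp 1 y)
lemma fB_swp (y : F) : fB (swp y) = fA y := congrArg Nat.cast (cyc_swp 0 y)
lemma fA_pi (y : F) : fA (pi' y) = fB y := congrArg Nat.cast (cyc_pi 1 y)
lemma fB_pi (y : F) : fB (pi' y) = fA y := congrArg Nat.cast (cyc_pi 0 y)

@[simp] lemma swp_swp (y : F) : swp (swp y) = y := by
  have : swp * swp = 1 := aut_ext (by simp) (by simp)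
  exact DFunLike.congr_fun this y

lemma swp_mul_σ : swp * σ = τ * swp := aut_ext (by simp) (by simp)
lemma swp_mul_τ : swp * τ = σ * swp := aut_ext (by simp) (by simp)
lemma swp_σ (y : F) : swp (σ y) = τ (swp y) := DFunLike.congr_fun swp_mul_σ y
lemma swp_τ (y : F) : swp (τ y) = σ (swp y) := DFunLike.congr_fun swp_mul_τ y

lemma σ_pow_swp (n : ℕ) (y : F) : (σ ^ n) (swp y) = swp ((τ ^ n) y) := by
  induction n generalizing y with
  | zero => simp
  | succ n ih => rw [pow_succ, pow_succ, MulAut.mul_apply, MulAut.mul_apply, ← swp_τ, ih]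

lemma τ_pow_swp (n : ℕ) (y : F) : (τ ^ n) (swp y) = swp ((σ ^ n) y) := by
  rw [← swp_swp ((τ ^ n) (swp y)), ← σ_pow_swp, swp_swp]

lemma out_of {φ ψ : MulAut F} (g : F) (h1 : φ ga = g * ψ ga * g⁻¹) (h2 : φ gb = g * ψ gb * g⁻¹) :
    OutEq φ ψ := ⟨g, aut_ext (by simp [h1]) (by simp [h2])⟩

lemma out_rel1 : OutEq σ (pi' * σ⁻¹ * τ) := by
  have e : OutEq (σ * τ⁻¹) (pi' * σ⁻¹) := by
    have e1 : σ⁻¹ ga = ga * gb⁻¹ := by rw [MulAut.inv_apply, MulEquiv.symm_apply_eq]; simp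
    have e2 : σ⁻¹ gb = gb := by rw [MulAut.inv_apply, MulEquiv.symm_apply_eq]; simp
    have e3 : τ⁻¹ gb = gb * ga⁻¹ := by rw [MulAut.inv_apply, MulEquiv.symm_apply_eq]; simp
    have e4 : τ⁻¹ ga = ga := by rw [MulAut.inv_apply, MulEquiv.symm_apply_eq]; simp
    refine out_of ga ?_ ?_
    · simp [MulAut.mul_apply, e1, e4, mul_assoc]
    · simp [MulAut.mul_apply, e2, e3]
  simpa [mul_assoc] using e.mul (OutEq.refl τ)

lemma out_rel2 : OutEq (pi' * σ⁻¹) (σ * τ⁻¹) := by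
  have := out_rel1.mul (OutEq.refl τ⁻¹)
  simpa [mul_assoc] using this.symm

lemma out_rel3 : OutEq (σ * pi') (pi' * τ⁻¹) := by
  have e3 : τ⁻¹ gb = gb * ga⁻¹ := by rw [MulAut.inv_apply, MulEquiv.symm_apply_eq]; simp
  have e4 : τ⁻¹ ga = ga := by rw [MulAut.inv_apply, MulEquiv.symm_apply_eq]; simp
  refine out_of gb⁻¹ ?_ ?_
  · simp [MulAut.mul_apply, e4]
  · simp [MulAut.mul_apply, e3, mul_assoc]

lemma out_rel7 : OutEq (σ⁻¹) (pi'⁻¹ * σ * τ⁻¹) := by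
  have := (OutEq.refl pi'⁻¹).mul out_rel2
  simpa [mul_assoc] using this

lemma fA_out {φ ψ : MulAut F} (h : OutEq φ ψ) (y : F) : fA (φ y) = fA (ψ y) :=
  congrArg Nat.cast (h.cyc 0 y)
lemma fB_out {φ ψ : MulAut F} (h : OutEq φ ψ) (y : F) : fB (φ y) = fB (ψ y) :=
  congrArg Nat.cast (h.cyc 1 y)

lemma fA_σz (n : ℤ) (y : F) : fA ((σ ^ n) y) = fA y := by
  obtain ⟨c, T, _, _, _, h⟩ := syll y
  exact congrArg Nat.cast (h n).1

lemma fA_σ (y : F) : fA (σ y) = fA y := by simpa using fA_σz 1 y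
lemma fA_σinv (y : F) : fA (σ⁻¹ y) = fA y := by simpa using fA_σz (-1) y
lemma fB_τ (y : F) : fB (τ y) = fB y := by
  rw [← fA_swp, swp_τ, fA_σ, fA_swp]

lemma fA_τ (y : F) : fA (τ y) = fB (σ y) := by
  rw [fB_out out_rel1 y, MulAut.mul_apply, MulAut.mul_apply, fB_pi, fA_σinv]

lemma fA_τinv (y : F) : fA (τ⁻¹ y) = fB (σ⁻¹ y) := by
  have := fB_out out_rel7 y
  rw [this, MulAut.mul_apply, MulAut.mul_apply, ← fA_pi, ← MulAut.mul_apply, mul_inv_cancel,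
    MulAut.one_apply, fA_σ]

/-- The function `M`. -/
def fM (y : F) : ℤ := fA y + fB y - fB (σ y)

lemma fM_swp (y : F) : fM (swp y) = fM y := by
  unfold fM
  rw [fA_swp, fB_swp, ← swp_τ, fB_swp, fA_τ]; ring

lemma fB_σ (y : F) : fB (σ y) = fA y + fB y - fM y := by unfold fM; ring
lemma fA_τ' (y : F) : fA (τ y) = fA y + fB y - fM y := by rw [fA_τ, fB_σ]

/-- syllable data represents `y` -/
def SRep (c : ℤ) (T : List (ℤ × ℤ)) (y : F) : Prop :=
  0 ≤ c ∧ (T.length : ℤ) = fA y ∧ (∀ p ∈ T, (p.2 = 1 ∨ p.2 = -1 ∨ (p.2 = 0 ∧ p.1 ≠ 0))) ∧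
    ∀ n : ℤ, fB ((σ ^ n) y) = c + (T.map fun p => |p.1 + n * p.2|).sum

lemma exists_rep (y : F) : ∃ c T, SRep c T y := by
  obtain ⟨c, T, h1, h2, h3, h4⟩ := syll y
  exact ⟨c, T, h1, congrArg Nat.cast h2, h3, fun n => (h4 n).2⟩

def sft (T : List (ℤ × ℤ)) : List (ℤ × ℤ) := T.map fun p => (p.1 + p.2, p.2)
def tS (T : List (ℤ × ℤ)) : ℤ := (T.map fun p => max 0 (-(p.1 * p.2))).sum

lemma SRep.shift {c T y} (h : SRep c T y) : SRep c (sft T) (σ y) := by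
  obtain ⟨h1, h2, h3, h4⟩ := h
  refine ⟨h1, ?_, ?_, ?_⟩
  · rw [fA_σ, ← h2, sft, List.length_map]
  · intro p hp
    simp only [sft, List.mem_map] at hp
    obtain ⟨q, hq, rfl⟩ := hp
    rcases h3 q hq with h | h | ⟨h, h'⟩
    · exact Or.inl h
    · exact Or.inr (Or.inl h)
    · exact Or.inr (Or.inr ⟨h, by simpa [h] using h'⟩)
  · intro n
    rw [← MulAut.mul_apply, ← zpow_add_one, h4, sft, List.map_map]
    congr 3
    ext p
    simp only [Function.comp]
    ring_nf

lemma exists_bound (T : List (ℤ × ℤ)) : ∃ N : ℤ, 0 ≤ N ∧ ∀ p ∈ T, |p.1| ≤ N := by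
  induction T with
  | nil => exact ⟨0, le_rfl, by simp⟩
  | cons p T ih =>
    obtain ⟨N, h0, h⟩ := ih
    refine ⟨max N |p.1|, by simp [h0], ?_⟩
    intro q hq
    rcases List.mem_cons.1 hq with rfl | hq
    · exact le_max_right _ _
    · exact (h q hq).trans (le_max_left _ _)

lemma tS_formula (T : List (ℤ × ℤ)) (n : ℤ) (hb : ∀ p ∈ T, |p.1| ≤ n)
    (hT : ∀ p ∈ T, (p.2 = 1 ∨ p.2 = -1 ∨ (p.2 = 0 ∧ p.1 ≠ 0))) :
    2 * tS T = (T.map fun p => |p.1 + 0 * p.2|).sum +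
      n * ((T.map fun p => |p.1 + (n + 1) * p.2|).sum - (T.map fun p => |p.1 + n * p.2|).sum)
      - (T.map fun p => |p.1 + n * p.2|).sum := by
  unfold tS
  induction T with
  | nil => simp
  | cons p T ih =>
    have ih' := ih (fun q hq => hb q (List.mem_cons_of_mem _ hq))
      (fun q hq => hT q (List.mem_cons_of_mem _ hq))
    have h1 := hb p List.mem_cons_self
    have h2 := hT p List.mem_cons_self
    simp only [List.map_cons, List.sum_cons]
    obtain ⟨m, e⟩ := p
    simp only at h1 h2 ⊢
    rw [abs_le] at h1
    have key : 2 * max 0 (-(m * e)) = |m + 0 * e| + n * (|m + (n + 1) * e| - |m + n * e|)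
        - |m + n * e| := by
      rcases h2 with rfl | rfl | ⟨rfl, -⟩
      · rw [abs_of_nonneg (by linarith : 0 ≤ m + (n + 1) * 1), abs_of_nonneg (by linarith : 0 ≤ m + n * 1)]
        rcases le_total 0 m with h | h
        · rw [max_eq_left (by linarith), abs_of_nonneg (by linarith)]; ring
        · rw [max_eq_right (by linarith), abs_of_nonpos (by linarith)]; ring
      · rw [abs_of_nonpos (by linarith : m + (n + 1) * -1 ≤ 0), abs_of_nonpos (by linarith : m + n * -1 ≤ 0)]
        rcases le_total 0 m with h | h
        · rw [max_eq_right (by linarith), abs_of_nonneg (by linarith)]; ring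
        · rw [max_eq_left (by linarith), abs_of_nonpos (by linarith)]; ring
      · simp
    linarith

lemma tS_unique {c T c' T' y} (h : SRep c T y) (h' : SRep c' T' y) : tS T = tS T' := by
  obtain ⟨N, -, hb⟩ := exists_bound T
  obtain ⟨N', -, hb'⟩ := exists_bound T'
  have e1 := tS_formula T (max N N') (fun p hp => (hb p hp).trans (le_max_left _ _)) h.2.2.1
  have e2 := tS_formula T' (max N N') (fun p hp => (hb' p hp).trans (le_max_right _ _)) h'.2.2.1
  generalize max N N' = n at e1 e2
  have a0 := (h.2.2.2 0).symm.trans (h'.2.2.2 0)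
  have a1 := (h.2.2.2 n).symm.trans (h'.2.2.2 n)
  have a2 := (h.2.2.2 (n + 1)).symm.trans (h'.2.2.2 (n + 1))
  have a3 : (T.map fun p => |p.1 + (n + 1) * p.2|).sum - (T.map fun p => |p.1 + n * p.2|).sum =
    (T'.map fun p => |p.1 + (n + 1) * p.2|).sum - (T'.map fun p => |p.1 + n * p.2|).sum := by linarith
  rw [a3] at e1
  linarith

/-- total number of negative overlaps -/
def fS (y : F) : ℤ := tS (exists_rep y).choose_spec.choose

lemma fS_eq {c T y} (h : SRep c T y) : fS y = tS T :=
  tS_unique (exists_rep y).choose_spec.choose_spec h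

def hs (T : List (ℤ × ℤ)) (n : ℤ) : ℤ := (T.map fun p => |p.1 + n * p.2|).sum

/-- All termwise inequalities at once. -/
lemma list_facts (T : List (ℤ × ℤ))
    (hT : ∀ p ∈ T, (p.2 = 1 ∨ p.2 = -1 ∨ (p.2 = 0 ∧ p.1 ≠ 0))) :
    0 ≤ T.length + hs T 0 - hs T 1 ∧
    2 * hs T 1 ≤ hs T 0 + hs T 2 ∧
    0 ≤ tS T ∧ tS T ≤ hs T 0 ∧ 0 ≤ tS (sft T) ∧ tS (sft T) ≤ tS T ∧
    (0 < tS T → tS (sft T) < tS T) ∧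
    hs T 0 + hs T 2 - 2 * hs T 1 ≤ 2 * tS T ∧
    (hs T 0 ≤ hs T 1 + 2 * tS T) ∧
    2 * tS T ≤ hs T 0 + hs T (-2) - 2 * T.length ∧
    (hs T 1 - hs T 2 - hs T (-1) + hs T (-2) ≤ hs T 1 + hs T (-1) - 2 * T.length) ∧
    (-(hs T 1 - hs T 2 - hs T (-1) + hs T (-2)) ≤ hs T 1 + hs T (-1) - 2 * T.length) ∧
    2 * tS (sft T) ≤ 2 * tS T - (hs T 0 + hs T 2 - 2 * hs T 1) := by
  induction T with
  | nil => simp [hs, tS, sft]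
  | cons p T ih =>
    have ih' := ih (fun q hq => hT q (List.mem_cons_of_mem _ hq))
    have h2 := hT p List.mem_cons_self
    have g1 : ∀ n, hs (p :: T) n = |p.1 + n * p.2| + hs T n := fun n => by simp [hs]
    have g2 : tS (p :: T) = max 0 (-(p.1 * p.2)) + tS T := by simp [tS]
    have g3 : tS (sft (p :: T)) = max 0 (-((p.1 + p.2) * p.2)) + tS (sft T) := by simp [tS, sft]
    simp only [g1, g2, g3, List.length_cons]
    push_cast
    obtain ⟨m, e⟩ := p
    simp only at h2 ⊢
    simp only [abs_eq_max_neg]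
    generalize hs T 0 = x0 at *
    generalize hs T 1 = x1 at *
    generalize hs T 2 = x2 at *
    generalize hs T (-1) = x3 at *
    generalize hs T (-2) = x4 at *
    generalize tS T = x5 at *
    generalize tS (sft T) = x6 at *
    generalize T.length = x7 at *
    clear ih hT g1 g2 g3
    rcases h2 with rfl | rfl | ⟨rfl, h0⟩
    · omega
    · omega
    · omega

lemma σz_two (y : F) : (σ ^ (2 : ℤ)) y = σ (σ y) := by
  rw [show (2 : ℤ) = 1 + 1 from rfl, zpow_add]; simp [MulAut.mul_apply]
lemma σz_neg_two (y : F) : (σ ^ (-2 : ℤ)) y = σ⁻¹ (σ⁻¹ y) := by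
  rw [show (-2 : ℤ) = -1 + -1 from rfl, zpow_add, zpow_neg_one, MulAut.mul_apply]

lemma SRep.h0 {c T y} (h : SRep c T y) : fB y = c + hs T 0 := by
  have := h.2.2.2 0; rwa [zpow_zero] at this
lemma SRep.h1 {c T y} (h : SRep c T y) : fB (σ y) = c + hs T 1 := by
  have := h.2.2.2 1; rwa [zpow_one] at this
lemma SRep.h2 {c T y} (h : SRep c T y) : fB (σ (σ y)) = c + hs T 2 := by
  rw [← σz_two]; exact h.2.2.2 2
lemma SRep.hm1 {c T y} (h : SRep c T y) : fB (σ⁻¹ y) = c + hs T (-1) := by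
  have := h.2.2.2 (-1); rwa [zpow_neg_one] at this
lemma SRep.hm2 {c T y} (h : SRep c T y) : fB (σ⁻¹ (σ⁻¹ y)) = c + hs T (-2) := by
  rw [← σz_neg_two]; exact h.2.2.2 (-2)

lemma M_σ_eq (y : F) : fM (σ y) = fA y + fB (σ y) - fB (σ (σ y)) := by
  unfold fM; rw [fA_σ]

lemma facts_σ (y : F) : 0 ≤ fM y ∧ fM (σ y) ≤ fM y ∧ 0 ≤ fS y ∧ fS y ≤ fB y ∧
    0 ≤ fS (σ y) ∧ fS (σ y) ≤ fS y ∧ (0 < fS y → fS (σ y) < fS y) ∧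
    fM y - fM (σ y) ≤ 2 * fS y ∧ fM y ≤ fA y + 2 * fS y ∧
    2 * fS (σ y) ≤ 2 * fS y - (fM y - fM (σ y)) := by
  obtain ⟨c, T, h⟩ := exists_rep y
  have L := list_facts T h.2.2.1
  rw [fS_eq h, fS_eq h.shift, M_σ_eq]
  have e0 := h.h0
  have e1 := h.h1
  have e2 := h.h2
  have e3 := h.1
  have e4 := h.2.1
  unfold fM
  refine ⟨?_, ?_, ?_, ?_, ?_, ?_, ?_, ?_, ?_, ?_⟩ <;> first | linarith | exact L.2.2.2.2.2.2.1

lemma inv_σ (y : F) : σ⁻¹ (σ y) = y := by simp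
lemma inv_τ (y : F) : τ⁻¹ (τ y) = y := by simp

lemma B_σσ (y : F) : fB (σ (σ y)) = fB (σ⁻¹ (σ⁻¹ (τ y))) := by
  have h1 : OutEq (σ * σ) (pi' * τ⁻¹ * σ⁻¹ * τ) := by
    have a1 := (OutEq.refl σ).mul out_rel1
    have a2 := out_rel3.mul (OutEq.refl (σ⁻¹ * τ))
    refine a1.trans ?_
    simpa [mul_assoc] using a2
  have := fB_out h1 y
  rw [MulAut.mul_apply] at this
  rw [this, MulAut.mul_apply, MulAut.mul_apply, MulAut.mul_apply, fB_pi, fA_τinv]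

/-- K' and K2' -/
lemma facts_K (y : F) : 2 * fS (τ y) ≤ fM y - fM (σ y) ∧
    (fM (τ y) = fM y → fM (σ (τ y)) = fM (σ y)) := by
  obtain ⟨c, T, h⟩ := exists_rep (τ y)
  have L := list_facts T h.2.2.1
  rw [fS_eq h, M_σ_eq, M_σ_eq, B_σσ y]
  have e0 := h.h0
  have e1 := h.h1
  have e2 := h.h2
  have e3 := h.1
  have e4 := h.2.1
  have e5 := h.hm1
  have e6 := h.hm2
  have e7 : fA y = fB (σ⁻¹ (τ y)) := by rw [← fA_τinv, inv_τ]
  have e8 := fB_τ y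
  have e9 := fA_τ y
  unfold fM
  refine ⟨by linarith, fun hh => ?_⟩
  apply le_antisymm <;> linarith

def fSa (y : F) : ℤ := fS (swp y)
lemma fSa_swp (y : F) : fSa (swp y) = fS y := by unfold fSa; rw [swp_swp]

lemma facts_τ (y : F) : fM (τ y) ≤ fM y ∧ 0 ≤ fSa y ∧ fSa y ≤ fA y ∧
    0 ≤ fSa (τ y) ∧ fSa (τ y) ≤ fSa y ∧ (0 < fSa y → fSa (τ y) < fSa y) ∧
    fM y - fM (τ y) ≤ 2 * fSa y ∧ fM y ≤ fB y + 2 * fSa y ∧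
    2 * fSa (τ y) ≤ 2 * fSa y - (fM y - fM (τ y)) := by
  have := facts_σ (swp y)
  rw [← swp_τ, fM_swp, fM_swp, fA_swp, fB_swp] at this
  exact this.2

lemma facts_K' (y : F) : 2 * fSa (σ y) ≤ fM y - fM (τ y) ∧
    (fM (σ y) = fM y → fM (τ (σ y)) = fM (τ y)) := by
  have := facts_K (swp y)
  rw [← swp_σ, ← swp_τ, ← swp_τ, fM_swp, fM_swp, fM_swp, fM_swp] at this
  exact this

def Ast (y : F) : Prop := fS y = 0 ∧ 2 * fSa y = fM y - fM (τ y)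
def Bst (y : F) : Prop := fSa y = 0 ∧ 2 * fS y = fM y - fM (σ y)
def SS (y : F) : ℤ := fSa y + fS y

lemma SS_nonneg (y : F) : 0 ≤ SS y := by
  have h1 := facts_σ y
  have h2 := facts_τ y
  unfold SS; linarith

lemma Ast_swp {y : F} (h : Bst y) : Ast (swp y) := by
  unfold Ast Bst at *
  rw [fSa_swp, ← swp_σ, fM_swp, fM_swp]; exact h
lemma Bst_swp {y : F} (h : Ast y) : Bst (swp y) := by
  unfold Ast Bst at *
  rw [fSa_swp, ← swp_τ, fM_swp, fM_swp]; exact h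
lemma SS_swp (y : F) : SS (swp y) = SS y := by
  unfold SS; rw [fSa_swp]; unfold fSa; ring

lemma step_σ (y : F) : SS (σ y) < SS y ∨ Ast y := by
  have h1 := facts_σ y
  have h2 := facts_τ y
  have h3 := facts_K' y
  unfold SS Ast
  by_cases h : 0 < fS y
  · left
    have := h1.2.2.2.2.2.2.1 h
    linarith
  · by_cases h' : fSa (σ y) + fS (σ y) < fSa y + fS y
    · exact Or.inl h'
    · right
      constructor <;> linarith

lemma A1 {y : F} (h : Ast y) : Ast (σ y) ∧ fM (σ y) = fM y ∧ fM (τ (σ y)) = fM (τ y) := by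
  have h1 := facts_σ y
  have h2 := facts_τ y
  have h3 := facts_K' y
  have h4 := facts_τ (σ y)
  obtain ⟨a, b⟩ := h
  have e1 : fM (σ y) = fM y := by linarith
  have e2 := h3.2 e1
  refine ⟨⟨by linarith, by linarith⟩, e1, e2⟩

lemma A2 {y : F} (h : Ast y) : SS (τ y) = 0 := by
  have h1 := facts_σ y
  have h2 := facts_τ y
  have h3 := facts_K y
  have h4 := facts_σ (τ y)
  obtain ⟨a, b⟩ := h
  unfold SS
  linarith

lemma Ast_of_SS {y : F} (h : SS y = 0) : Ast y := by
  have h1 := facts_σ y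
  have h2 := facts_τ y
  unfold SS at h
  unfold Ast
  constructor <;> linarith

lemma Bst_of_SS {y : F} (h : SS y = 0) : Bst y := by
  have := Bst_swp (Ast_of_SS (y := swp y) (by rw [SS_swp, h]))
  rwa [swp_swp] at this

lemma step_τ (y : F) : SS (τ y) < SS y ∨ Bst y := by
  rcases step_σ (swp y) with h | h
  · left; rwa [← swp_τ, SS_swp, SS_swp] at h
  · right; have := Bst_swp h; rwa [swp_swp] at this

lemma B1 {y : F} (h : Bst y) : Bst (τ y) := by
  have := Bst_swp (A1 (Ast_swp h)).1
  rwa [← swp_τ, swp_swp] at this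

lemma B2 {y : F} (h : Bst y) : SS (σ y) = 0 := by
  have := A2 (Ast_swp h)
  rwa [← swp_σ, SS_swp] at this

/-- apply a word in `σ` (true), `τ` (false); the head is applied last -/
def ap : List Bool → F → F
  | [], y => y
  | x :: w, y => (if x then σ else τ) (ap w y)

lemma ap_append (w1 w2 : List Bool) (y : F) : ap (w1 ++ w2) y = ap w1 (ap w2 y) := by
  induction w1 with
  | nil => rfl
  | cons x w ih => simp [ap, ih]

lemma ap_swp (w : List Bool) (y : F) : ap w (swp y) = swp (ap (w.map not) y) := by
  induction w with
  | nil => rfl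
  | cons x w ih =>
    cases x <;> simp [ap, ih, swp_σ, swp_τ]

def ff (y : F) : ℤ := fA y + fB y

lemma ff_cyclen (y : F) : ff y = cyclen y := by
  rw [cyclen_eq]; unfold ff fA fB; push_cast; rfl

lemma ff_swp (y : F) : ff (swp y) = ff y := by unfold ff; rw [fA_swp, fB_swp]; ring

lemma chain_lem (L : ℤ) (y : F) (hy : ff y ≤ L) (w : List Bool) :
    SS (ap w y) + w.length ≤ L ∨ (∃ w', w = true :: w' ∧ Ast (ap w y)) ∨
      (∃ w', w = false :: w' ∧ Bst (ap w y)) := by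
  induction w with
  | nil =>
    left
    have h1 := facts_σ y
    have h2 := facts_τ y
    unfold ff at hy
    simp only [ap, SS, List.length_nil]; push_cast; linarith
  | cons x w ih =>
    cases x
    · have : SS (ap (false :: w) y) + (false :: w).length ≤ L ∨ Bst (ap (false :: w) y) := by
        simp only [ap, List.length_cons, Bool.false_eq_true, if_false]
        rcases ih with h | ⟨_, _, h⟩ | ⟨_, _, h⟩
        · rcases step_τ (ap w y) with h' | h'
          · left; push_cast; linarith
          · right; exact B1 h'
        · right; exact Bst_of_SS (A2 h)
        · right; exact B1 h
      rcases this with h | h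
      · exact Or.inl h
      · exact Or.inr (Or.inr ⟨w, rfl, h⟩)
    · have : SS (ap (true :: w) y) + (true :: w).length ≤ L ∨ Ast (ap (true :: w) y) := by
        simp only [ap, List.length_cons, if_true]
        rcases ih with h | ⟨_, _, h⟩ | ⟨_, _, h⟩
        · rcases step_σ (ap w y) with h' | h'
          · left; push_cast; linarith
          · right; exact (A1 h').1
        · right; exact (A1 h).1
        · right; exact Ast_of_SS (B2 h)
      rcases this with h | h
      · exact Or.inl h
      · exact Or.inr (Or.inl ⟨w, rfl, h⟩)

def al (y : F) : ℤ := fA y - fM y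
def be (y : F) : ℤ := fB y - fM y

lemma ff_σ (y : F) : ff (σ y) = ff y + al y := by unfold ff al; rw [fA_σ, fB_σ]; ring
lemma ff_τ (y : F) : ff (τ y) = ff y + be y := by unfold ff be; rw [fA_τ', fB_τ]; ring

lemma ff_σ_pow {y : F} (h : Ast y) (n : ℕ) : ff ((σ ^ n) y) = ff y + n * al y := by
  induction n generalizing y with
  | zero => simp
  | succ n ih =>
    rw [pow_succ, MulAut.mul_apply, ih (A1 h).1, ff_σ]
    have : al (σ y) = al y := by unfold al; rw [fA_σ, (A1 h).2.1]
    rw [this]; push_cast; ring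

lemma al_swp (y : F) : al (swp y) = be y := by unfold al be; rw [fA_swp, fM_swp]
lemma be_swp (y : F) : be (swp y) = al y := by unfold al be; rw [fB_swp, fM_swp]

lemma ff_τ_pow {y : F} (h : Bst y) (n : ℕ) : ff ((τ ^ n) y) = ff y + n * be y := by
  have := ff_σ_pow (Ast_swp h) n
  rwa [σ_pow_swp, ff_swp, ff_swp, al_swp] at this

lemma al_nonneg {y : F} (h : Ast y) : 0 ≤ al y := by
  have h1 := facts_σ y
  unfold al
  have := h.1
  linarith

lemma be_nonneg {y : F} (h : Bst y) : 0 ≤ be y := by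
  rw [← al_swp]; exact al_nonneg (Ast_swp h)

def R0 (C : ℤ) (z z' : F) : Prop := SS z = 0 ∧ SS z' = 0 ∧ al z ≤ C * al z' ∧ be z ≤ C * be z' ∧
  2 * fM z ≤ C * ff z'

def R1 (C : ℤ) (z z' : F) : Prop := Ast z ∧ Ast z' ∧ al z ≤ C * al z' ∧
  be (τ z) ≤ C * be (τ z') ∧ 2 * fM (τ z) ≤ C * ff (τ z') ∧ ff z ≤ C * ff z'

lemma SS_facts {z : F} (h : SS z = 0) : SS (σ z) = 0 ∧ SS (τ z) = 0 ∧ fM (σ z) = fM z ∧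
    fM (τ z) = fM z ∧ al (σ z) = al z ∧ be (σ z) = al z + be z ∧ al (τ z) = al z + be z ∧
    be (τ z) = be z ∧ 0 ≤ al z ∧ 0 ≤ be z := by
  have hA := Ast_of_SS h
  have hB := Bst_of_SS h
  have e1 := (A1 hA).2.1
  have e2 : fM (τ z) = fM z := by
    have := (A1 (Ast_swp hB)).2.1
    rwa [← swp_τ, fM_swp, fM_swp] at this
  refine ⟨B2 hB, A2 hA, e1, e2, ?_, ?_, ?_, ?_, al_nonneg hA, be_nonneg hB⟩
  · unfold al; rw [fA_σ, e1]
  · unfold al be; rw [fB_σ, e1]; ring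
  · unfold al be; rw [fA_τ', e2]; ring
  · unfold be; rw [fB_τ, e2]

lemma R0_step {C : ℤ} (hC : 0 ≤ C) {z z' : F} (h : R0 C z z') (x : Bool) :
    R0 C ((if x then σ else τ) z) ((if x then σ else τ) z') := by
  obtain ⟨h1, h2, h3, h4, h5⟩ := h
  obtain ⟨a1, a2, a3, a4, a5, a6, a7, a8, a9, a10⟩ := SS_facts h1
  obtain ⟨b1, b2, b3, b4, b5, b6, b7, b8, b9, b10⟩ := SS_facts h2
  have c1 := mul_nonneg hC b9
  have c2 := mul_nonneg hC b10
  cases x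
  · simp only [Bool.false_eq_true, if_false]
    refine ⟨a2, b2, ?_, ?_, ?_⟩
    · rw [a7, b7]; linarith
    · rw [a8, b8]; linarith
    · rw [a4, ff_τ]; linarith
  · simp only [if_true]
    refine ⟨a1, b1, ?_, ?_, ?_⟩
    · rw [a5, b5]; linarith
    · rw [a6, b6]; linarith
    · rw [a3, ff_σ]; linarith

lemma R1_step {C : ℤ} (hC : 0 ≤ C) {z z' : F} (h : R1 C z z') :
    R1 C (σ z) (σ z') ∧ R0 C (τ z) (τ z') := by
  obtain ⟨h1, h2, h3, h4, h5, h6⟩ := h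
  have a1 := A1 h1
  have b1 := A1 h2
  have key : ∀ y : F, Ast y → al (σ y) = al y ∧ be (τ (σ y)) = al y + be (τ y) ∧
      al (τ y) = al y + be (τ y) ∧ ff (τ (σ y)) = ff (τ y) + 2 * al y ∧ 0 ≤ be (τ y) ∧ 0 ≤ al y := by
    intro y hy
    have e := A1 hy
    refine ⟨?_, ?_, ?_, ?_, be_nonneg (Bst_of_SS (A2 hy)), al_nonneg hy⟩
    · unfold al; rw [fA_σ, e.2.1]
    · unfold al be; rw [fB_τ, fB_τ, fB_σ, e.2.2]; ring
    · unfold al be; rw [fA_τ', fB_τ]; ring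
    · unfold al ff; rw [fA_τ', fA_τ', fB_τ, fB_τ, fA_σ, fB_σ, e.2.1]; ring
  obtain ⟨k1, k2, k3, k4, k5, k6⟩ := key z h1
  obtain ⟨l1, l2, l3, l4, l5, l6⟩ := key z' h2
  have c1 := mul_nonneg hC l5
  have c2 := mul_nonneg hC l6
  constructor
  · refine ⟨a1.1, b1.1, ?_, ?_, ?_, ?_⟩
    · rw [k1, l1]; exact h3
    · rw [k2, l2]; linarith
    · rw [a1.2.2, l4]; linarith
    · rw [ff_σ, ff_σ]; linarith
  · refine ⟨A2 h1, A2 h2, ?_, h4, h5⟩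
    rw [k3, l3]; linarith

lemma R_chain {C : ℤ} (hC : 0 ≤ C) {z z' : F} (h : R1 C z z') (w : List Bool) :
    R1 C (ap w z) (ap w z') ∨ R0 C (ap w z) (ap w z') := by
  induction w with
  | nil => exact Or.inl h
  | cons x w ih =>
    rcases ih with h | h
    · cases x
      · right; exact (R1_step hC h).2
      · left; exact (R1_step hC h).1
    · right; exact R0_step hC h x

lemma ff_nonneg (y : F) : 0 ≤ ff y := by unfold ff; linarith [fA_nonneg y, fB_nonneg y]

lemma R_concl {C : ℤ} (hC : 0 ≤ C) {z z' : F} (h : R1 C z z') (w : List Bool) :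
    ff (ap w z) ≤ 2 * C * ff (ap w z') := by
  rcases R_chain hC h w with h | h
  · have := h.2.2.2.2.2
    have := mul_nonneg hC (ff_nonneg (ap w z'))
    linarith
  · obtain ⟨h1, h2, h3, h4, h5⟩ := h
    have e1 : ff (ap w z) = al (ap w z) + be (ap w z) + 2 * fM (ap w z) := by
      unfold ff al be; ring
    have e2 : ff (ap w z') = al (ap w z') + be (ap w z') + 2 * fM (ap w z') := by
      unfold ff al be; ring
    have e3 := mul_nonneg hC (facts_σ (ap w z')).1
    have e4 : C * ff (ap w z') = C * al (ap w z') + C * be (ap w z') + 2 * (C * fM (ap w z')) := by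
      rw [e2]; ring
    linarith

lemma ff_step_le (x : Bool) (y : F) : ff ((if x then σ else τ) y) ≤ 2 * ff y := by
  have := facts_σ y
  have := fA_nonneg y
  have := fB_nonneg y
  cases x
  · simp only [Bool.false_eq_true, if_false]
    rw [ff_τ]; unfold be ff; linarith
  · simp only [if_true]
    rw [ff_σ]; unfold al ff; linarith

lemma ff_ap_le (w : List Bool) (y : F) : ff (ap w y) ≤ 2 ^ w.length * ff y := by
  induction w with
  | nil => simp [ap]
  | cons x w ih =>
    have := ff_step_le x (ap w y)
    rw [List.length_cons, pow_succ]
    simp only [ap]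
    linarith

lemma ff_pos {y : F} (h : y ≠ 1) : 1 ≤ ff y := by
  rw [ff_cyclen]; have := cyclen_pos h; omega

lemma ap_ne_one {y : F} (h : y ≠ 1) (w : List Bool) : ap w y ≠ 1 := by
  induction w with
  | nil => exact h
  | cons x w ih => simpa [ap] using ih

def HC (L k : ℕ) (u v : F) : Prop := ∀ w : List Bool, w ≠ [] → w.length ≤ 2 * L + 5 →
  ((ff ((σ ^ (k + 1)) (ap w u)) = ff ((σ ^ k) (ap w u)) ↔
    ff ((σ ^ (k + 1)) (ap w v)) = ff ((σ ^ k) (ap w v))) ∧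
   (ff ((τ ^ (k + 1)) (ap w u)) = ff ((τ ^ k) (ap w u)) ↔
    ff ((τ ^ (k + 1)) (ap w v)) = ff ((τ ^ k) (ap w v))))

lemma HC_swp {L k : ℕ} {u v : F} (h : HC L k u v) : HC L k (swp u) (swp v) := by
  intro w hw hl
  have := h (w.map not) (by simpa using hw) (by simpa using hl)
  simp only [ap_swp, σ_pow_swp, τ_pow_swp, ff_swp]
  exact ⟨this.2, this.1⟩

lemma HC_symm {L k : ℕ} {u v : F} (h : HC L k u v) : HC L k v u :=
  fun w hw hl => ⟨(h w hw hl).1.symm, (h w hw hl).2.symm⟩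

lemma le_mul_of_zero_iff {a b C : ℤ} (hb : 0 ≤ b) (h : b = 0 → a = 0) (hC : a ≤ C) (hC0 : 0 ≤ C) :
    a ≤ C * b := by
  rcases hb.eq_or_lt with h0 | h0
  · rw [h h0.symm, ← h0]; simp
  · nlinarith

lemma main_aux {L k : ℕ} {u v : F} (hu : u ≠ 1) (hv : v ≠ 1) (hul : ff u ≤ L) (hvl : ff v ≤ L)
    (H : HC L k u v) (w1 : List Bool) (hw : w1.length = L) (w2 : List Bool) :
    ff (ap w2 (ap (true :: w1) u)) ≤ 2 * (2 ^ (L + 3) * L) * ff (ap w2 (ap (true :: w1) v)) := by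
  have key : ∀ y : F, ff y ≤ L → Ast (ap (true :: w1) y) := by
    intro y hy
    rcases chain_lem L y hy (true :: w1) with h | ⟨_, _, h⟩ | ⟨_, h', _⟩
    · have := SS_nonneg (ap (true :: w1) y)
      rw [List.length_cons, hw] at h
      push_cast at h
      linarith
    · exact h
    · simp at h'
  have hU := key u hul
  have hV := key v hvl
  have bU := ff_ap_le (true :: w1) u
  have pV := ff_pos (ap_ne_one hv (true :: w1))
  have pV' := ff_pos (ap_ne_one hv (false :: true :: w1))
  have i1 := (H (true :: w1) (by simp) (by simp [hw]; omega)).1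
  have i2 := (H (false :: true :: w1) (by simp) (by simp [hw]; omega)).2
  have et : ∀ y, ap (false :: true :: w1) y = τ (ap (true :: w1) y) := fun y => rfl
  rw [et] at pV'
  rw [et, et] at i2
  generalize ap (true :: w1) u = U at *
  generalize ap (true :: w1) v = V at *
  rw [ff_σ_pow hU, ff_σ_pow hU, ff_σ_pow hV, ff_σ_pow hV] at i1
  have sU := A2 hU
  have sV := A2 hV
  rw [ff_τ_pow (Bst_of_SS sU), ff_τ_pow (Bst_of_SS sU), ff_τ_pow (Bst_of_SS sV),
    ff_τ_pow (Bst_of_SS sV)] at i2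
  push_cast at i1 i2
  have i1' : al V = 0 → al U = 0 := fun h => by
    have := i1.2 (by rw [h]; ring)
    linarith
  have i2' : be (τ V) = 0 → be (τ U) = 0 := fun h => by
    have := i2.2 (by rw [h]; ring)
    linarith
  rw [List.length_cons, hw] at bU
  have hL : (0 : ℤ) ≤ 2 ^ L * L := by positivity
  have e3 : (2 : ℤ) ^ (L + 3) * L = 8 * (2 ^ L * L) := by ring
  have bU2 : ff U ≤ 2 * (2 ^ L * L) := by
    have : (2 : ℤ) ^ (L + 1) * ff u ≤ 2 ^ (L + 1) * L := by gcongr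
    calc ff U ≤ _ := bU
      _ ≤ _ := this
      _ = _ := by ring
  have bT : ff (τ U) ≤ 2 * ff U := ff_step_le false U
  refine R_concl (by positivity) ⟨hU, hV, ?_, ?_, ?_, ?_⟩ w2
  · refine le_mul_of_zero_iff (al_nonneg hV) i1' ?_ (by positivity)
    have := facts_σ U
    have := fB_nonneg U
    unfold al; unfold ff at bU2; linarith
  · refine le_mul_of_zero_iff (be_nonneg (Bst_of_SS sV)) i2' ?_ (by positivity)
    have := facts_σ (τ U)
    have := fA_nonneg (τ U)
    unfold be; unfold ff at bU2 bT; linarith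
  · refine le_mul_of_zero_iff (ff_nonneg _) (fun h => by omega) ?_ (by positivity)
    have := fB_nonneg (σ (τ U))
    unfold fM; unfold ff at bU2 bT; linarith
  · refine le_mul_of_zero_iff (ff_nonneg _) (fun h => by omega) ?_ (by positivity)
    linarith

lemma main_C1 {L k : ℕ} {u v : F} (hu : u ≠ 1) (hv : v ≠ 1) (hul : ff u ≤ L) (hvl : ff v ≤ L)
    (H : HC L k u v) (w : List Bool) :
    ff (ap w u) ≤ 2 * (2 ^ (L + 3) * L) * ff (ap w v) := by
  by_cases hw : w.length ≤ L
  · have b := ff_ap_le w u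
    have p := ff_pos (ap_ne_one hv w)
    have h1 : (2 : ℤ) ^ w.length * ff u ≤ 2 ^ L * L := by
      have := ff_nonneg u
      gcongr
      norm_num
    have e3 : 2 * ((2 : ℤ) ^ (L + 3) * L) = 16 * (2 ^ L * L) := by ring
    have hL : (0 : ℤ) ≤ 2 ^ L * L := by positivity
    refine le_mul_of_zero_iff (ff_nonneg _) (fun h => by omega) ?_ (by positivity)
    linarith
  · push Not at hw
    obtain ⟨w2, w0, rfl, h0⟩ : ∃ w2 w0, w = w2 ++ w0 ∧ w0.length = L + 1 :=
      ⟨w.take (w.length - (L + 1)), w.drop (w.length - (L + 1)), by simp, by simp; omega⟩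
    obtain ⟨x, w1, rfl⟩ : ∃ x w1, w0 = x :: w1 := by
      cases w0 with
      | nil => simp at h0
      | cons x w1 => exact ⟨x, w1, rfl⟩
    have h1 : w1.length = L := by simpa using h0
    cases x
    · have := main_aux (u := swp u) (v := swp v) (by simpa using hu) (by simpa using hv)
        (by rwa [ff_swp]) (by rwa [ff_swp]) (HC_swp H) (w1.map not) (by simpa using h1) (w2.map not)
      rw [← ap_append, ← ap_append, ap_swp, ap_swp, ff_swp, ff_swp] at this
      simpa [Function.comp_def] using this
    · rw [ap_append, ap_append]
      exact main_aux hu hv hul hvl H w1 h1 w2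

/-- length of the longest common initial segment -/
def cp : List (Fin 2 × Bool) → List (Fin 2 × Bool) → ℕ
  | a :: l, b :: m => if a = b then cp l m + 1 else 0
  | _, _ => 0

lemma le_cp_iff (n : ℕ) (l m : List (Fin 2 × Bool)) :
    n ≤ cp l m ↔ n ≤ l.length ∧ n ≤ m.length ∧ l.take n = m.take n := by
  induction n generalizing l m with
  | zero => simp
  | succ n ih =>
    cases l with
    | nil => simp [cp]
    | cons a l =>
      cases m with
      | nil => simp [cp]
      | cons b m =>
        by_cases h : a = b
        · simp [cp, h, ih]
        · simp [cp, h]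

lemma cp_comm (l m : List (Fin 2 × Bool)) : cp l m = cp m l := by
  apply le_antisymm
  · have := (le_cp_iff _ l m).1 le_rfl
    exact (le_cp_iff _ m l).2 ⟨this.2.1, this.1, this.2.2.symm⟩
  · have := (le_cp_iff _ m l).1 le_rfl
    exact (le_cp_iff _ l m).2 ⟨this.2.1, this.1, this.2.2.symm⟩

lemma cp_ultra (n : ℕ) {l m k : List (Fin 2 × Bool)} (h1 : n ≤ cp l m) (h2 : n ≤ cp m k) :
    n ≤ cp l k := by
  rw [le_cp_iff] at *
  exact ⟨h1.1, h2.2.1, h1.2.2.trans h2.2.2⟩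

lemma cp_self (l : List (Fin 2 × Bool)) : cp l l = l.length := by
  induction l with
  | nil => rfl
  | cons a l ih => simp [cp, ih]

lemma cp_append (g l m : List (Fin 2 × Bool)) : cp (g ++ l) (g ++ m) = g.length + cp l m := by
  induction g with
  | nil => simp
  | cons a g ih => simp [cp, ih]; omega

/-- Gromov product -/
def cg (g h : F) : ℕ := cp g.toWord h.toWord

lemma cg_comm (g h : F) : cg g h = cg h g := cp_comm _ _
lemma cg_ultra (n : ℕ) {g h k : F} (h1 : n ≤ cg g h) (h2 : n ≤ cg h k) : n ≤ cg g k :=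
  cp_ultra n h1 h2
lemma cg_self (g : F) : cg g g = len g := cp_self _
lemma cg_le (g h : F) : cg g h ≤ len g := ((le_cp_iff _ _ _).1 (le_refl (cg g h))).1
lemma cg_le' (g h : F) : cg g h ≤ len h := ((le_cp_iff _ _ _).1 (le_refl (cg g h))).2.1

lemma len_inv (g : F) : len g⁻¹ = len g := by
  unfold len; rw [FreeGroup.toWord_inv, FreeGroup.invRev_length]

open FreeGroup in
lemma mul_decomp (g h : F) : ∃ K G H : List (Fin 2 × Bool), g.toWord = G ++ invRev K ∧
    h.toWord = K ++ H ∧ (g * h).toWord = G ++ H ∧ K.length = cg g⁻¹ h := by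
  obtain ⟨h1, h2, h3⟩ := (le_cp_iff _ _ _).1 (le_refl (cg g⁻¹ h))
  set k := cg g⁻¹ h with hk
  set K := h.toWord.take k with hK
  set H := h.toWord.drop k with hH
  set G' := g⁻¹.toWord.drop k with hG'
  have eh : h.toWord = K ++ H := by simp [hK, hH]
  have eg' : g⁻¹.toWord = K ++ G' := by rw [← h3, hG']; simp
  have eg : g.toWord = invRev G' ++ invRev K := by
    rw [← invRev_append, ← eg', toWord_inv, invRev_invRev]
  have hKl : K.length = k := by simp [hK]; omega
  refine ⟨K, invRev G', H, eg, eh, ?_, hKl⟩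
  have e1 : g * h = mk (invRev G' ++ H) := by
    rw [← mk_toWord (x := g), ← mk_toWord (x := h), eg, eh]
    simp only [← mul_mk, ← inv_mk]
    group
  rw [e1, toWord_mk]
  apply IsReduced.reduce_eq
  have rg : IsReduced (invRev G' ++ invRev K) := by rw [← eg]; exact isReduced_toWord
  have rh : IsReduced (K ++ H) := by rw [← eh]; exact isReduced_toWord
  refine List.isChain_append.2 ⟨(List.isChain_append.1 rg).1, (List.isChain_append.1 rh).2.1, ?_⟩
  intro a ha b hb hab
  by_contra hne
  have hc : cg g⁻¹ h = K.length + cp G' H := by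
    unfold cg; rw [eg', eh, cp_append]
  have h0 : cp G' H = 0 := by omega
  cases hG : G' with
  | nil => rw [hG] at ha; simp [invRev] at ha
  | cons p G'' =>
    cases hHc : H with
    | nil => rw [hHc] at hb; simp at hb
    | cons q H' =>
      rw [hG] at ha
      rw [hHc] at hb
      simp [invRev] at ha hb
      rw [hG, hHc] at h0
      have : p = q := by
        subst hb
        subst ha
        simp only at hab hne
        ext1
        · exact hab
        · revert hne; cases p.2 <;> cases q.2 <;> simp
      simp [cp, this] at h0

lemma len_mul (g h : F) : len (g * h) + 2 * cg g⁻¹ h = len g + len h := by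
  obtain ⟨K, G, H, h1, h2, h3, h4⟩ := mul_decomp g h
  unfold len
  rw [h1, h2, h3, ← h4]; simp; omega

lemma cg_mul (g h : F) : len g - cg g⁻¹ h ≤ cg (g * h) g := by
  obtain ⟨K, G, H, h1, h2, h3, h4⟩ := mul_decomp g h
  unfold len
  have : cg (g * h) g = G.length + cp H (FreeGroup.invRev K) := by
    unfold cg; rw [h1, h3, cp_append]
  rw [this, ← h4, h1]; simp

lemma len_eq_cnt (y : F) : len y = cnt 0 y + cnt 1 y := length_eq_count _

lemma cg_inv_lt {x : F} (hx : x ≠ 1) : 2 * cg x x⁻¹ < len x := by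
  have h1 := len_mul x x
  have a0 := cnt_pow 0 x 1
  have a1 := cnt_pow 1 x 1
  have b0 := cnt_pow 0 x 0
  have b1 := cnt_pow 1 x 0
  have hp := cyclen_pos hx
  rw [cyclen_eq] at hp
  have e1 := len_eq_cnt (x * x)
  have e2 := len_eq_cnt x
  rw [← pow_two] at e1 h1
  rw [cg_comm]
  simp only [zero_add, pow_one] at b0 b1
  norm_num at a0 a1
  omega

lemma len_eq_zero {x : F} (h : len x = 0) : x = 1 := by
  unfold len at h
  exact FreeGroup.toWord_eq_nil_iff.1 (List.eq_nil_of_length_eq_zero h)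

lemma len_mk_le (L : List (Fin 2 × Bool)) : len (FreeGroup.mk L) ≤ L.length := by
  exact FreeGroup.norm_mk_le

def linv (s : Fin 2 × Bool) : Fin 2 × Bool := (s.1, !s.2)

lemma mk_linv (s : Fin 2 × Bool) : (FreeGroup.mk [linv s] : F) = (FreeGroup.mk [s])⁻¹ := by
  simp [linv, FreeGroup.inv_mk, FreeGroup.invRev]

def zl (φ : MulAut F) (s : Fin 2 × Bool) : F := φ (FreeGroup.mk [s])

lemma zl_linv (φ : MulAut F) (s) : zl φ (linv s) = (zl φ s)⁻¹ := by
  unfold zl; rw [mk_linv, map_inv]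

lemma ltg (φ : MulAut F) (κ : Fin 2 × Bool → ℕ)
    (h1 : ∀ s t, s ≠ t → cg (zl φ s) (zl φ t) ≤ κ s)
    (h2 : ∀ s, κ s + κ (linv s) < len (zl φ s)) (w : List (Fin 2 × Bool)) :
    ∀ s, FreeGroup.IsReduced (s :: w) → κ s + 1 ≤ cg (φ (FreeGroup.mk (s :: w))) (zl φ s) ∧
      (w ≠ [] → 2 ≤ len (φ (FreeGroup.mk (s :: w)))) := by
  induction w with
  | nil =>
    intro s _
    refine ⟨?_, by simp⟩
    change _ ≤ cg (zl φ s) (zl φ s)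
    rw [cg_self]
    have := h2 s
    omega
  | cons t w ih =>
    intro s hs
    obtain ⟨hst, hs'⟩ := List.isChain_cons_cons.1 hs
    obtain ⟨i1, -⟩ := ih t hs'
    have e1 : φ (FreeGroup.mk (s :: t :: w)) = zl φ s * φ (FreeGroup.mk (t :: w)) := by
      unfold zl; rw [← map_mul, FreeGroup.mul_mk]; rfl
    rw [e1]
    generalize φ (FreeGroup.mk (t :: w)) = g at *
    have hne : linv s ≠ t := by
      rintro rfl
      have := hst rfl
      simp [linv] at this
    set k := cg (zl φ s)⁻¹ g with hk
    have hk1 : k ≤ κ t := by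
      by_contra hh
      push Not at hh
      have := cg_ultra (κ t + 1) (cg_comm g _ ▸ i1) (cg_comm _ g ▸ hh : κ t + 1 ≤ cg g (zl φ s)⁻¹)
      rw [← zl_linv] at this
      have := h1 t (linv s) hne.symm
      omega
    have hk2 : k ≤ κ (linv s) := by
      have := cg_ultra k (le_of_eq hk) (by omega : k ≤ cg g (zl φ t))
      rw [← zl_linv] at this
      exact this.trans (h1 _ _ hne)
    have a1 := cg_mul (zl φ s) g
    have a2 := len_mul (zl φ s) g
    rw [← hk] at a1 a2
    have a3 := h2 s
    have a4 := cg_le g (zl φ t)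
    refine ⟨by omega, fun _ => by omega⟩

lemma letters (s : Fin 2 × Bool) : (FreeGroup.mk [s] : F) ∈ ({ga, ga⁻¹, gb, gb⁻¹} : Set F) := by
  obtain ⟨i, e⟩ := s
  fin_cases i <;> cases e
  · right; left; exact mk_inv_of 0
  · left; rfl
  · right; right; right; exact mk_inv_of 1
  · right; right; left; rfl

lemma ltg_W1 (φ : MulAut F) (κ : Fin 2 × Bool → ℕ)
    (h1 : ∀ s t, s ≠ t → cg (zl φ s) (zl φ t) ≤ κ s)
    (h2 : ∀ s, κ s + κ (linv s) < len (zl φ s)) : IsW1 φ⁻¹ := by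
  have key : ∀ i : Fin 2, φ⁻¹ (FreeGroup.of i) ∈ ({ga, ga⁻¹, gb, gb⁻¹} : Set F) := by
    intro i
    have e : φ (φ⁻¹ (FreeGroup.of i)) = FreeGroup.of i := by simp
    have hl : len (FreeGroup.of i : F) = 1 := by simp [len]
    have hw := FreeGroup.mk_toWord (x := φ⁻¹ (FreeGroup.of i))
    have hr := FreeGroup.isReduced_toWord (x := φ⁻¹ (FreeGroup.of i))
    generalize (φ⁻¹ (FreeGroup.of i)).toWord = w at hw hr
    rw [← hw] at e ⊢
    cases w with
    | nil =>
      have : (FreeGroup.mk [] : F) = 1 := rfl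
      rw [this, map_one] at e
      rw [← e] at hl
      simp [len] at hl
    | cons s w =>
      have := (ltg φ κ h1 h2 w s hr).2
      rw [e, hl] at this
      have hw0 : w = [] := by by_contra hh; have := this hh; omega
      rw [hw0]
      exact letters s
  exact ⟨key 0, key 1⟩

def tot (φ : MulAut F) : ℕ := len (φ ga) + len (φ gb)

open FreeGroup in
lemma redK (φ : MulAut F) (hxy : len (φ ga) ≤ len (φ gb))
    (h : len (φ ga) ≤ cg (φ ga) (φ gb) + cg (φ ga)⁻¹ (φ gb)⁻¹) :
    ∃ φ', OutEq (φ * τ⁻¹) φ' ∧ tot φ' < tot φ := by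
  have hx1 : φ ga ≠ 1 := by
    intro h
    rw [map_eq_one_iff _ φ.injective] at h
    exact FreeGroup.of_ne_one 0 h
  have hx0 : 0 < len (φ ga) := by
    by_contra hh
    exact hx1 (len_eq_zero (by omega))
  have e3 : τ⁻¹ gb = gb * ga⁻¹ := by rw [MulAut.inv_apply, MulEquiv.symm_apply_eq]; simp
  have e4 : τ⁻¹ ga = ga := by rw [MulAut.inv_apply, MulEquiv.symm_apply_eq]; simp
  set x := φ ga with hx
  set y := φ gb with hy
  obtain ⟨h1, h2, h3⟩ := (le_cp_iff _ _ _).1 (le_refl (cg x y))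
  set i := cg x y
  obtain ⟨j1, j2, j3⟩ := (le_cp_iff (len x - i) x⁻¹.toWord y⁻¹.toWord).1
    (by change _ ≤ cg x⁻¹ y⁻¹; omega)
  obtain ⟨Pl, Q, ex, hP⟩ : ∃ Pl Q, x.toWord = Pl ++ Q ∧ Pl.length = i :=
    ⟨x.toWord.take i, x.toWord.drop i, by simp, by simp; omega⟩
  obtain ⟨S, ey1⟩ : ∃ S, y.toWord = Pl ++ S := by
    refine ⟨y.toWord.drop i, ?_⟩
    have : Pl = y.toWord.take i := by rw [← h3, ex, ← hP]; simp
    rw [this]; simp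
  have hlx : len x = Pl.length + Q.length := by unfold len; rw [ex]; simp
  have hQ : Q.length = len x - i := by omega
  obtain ⟨R, ey2⟩ : ∃ R, y.toWord = R ++ Q := by
    have a1 : x⁻¹.toWord = invRev Q ++ invRev Pl := by rw [toWord_inv, ex, invRev_append]
    have a2 : invRev Q = y⁻¹.toWord.take (len x - i) := by
      rw [← j3, a1, ← hQ, List.take_append_of_le_length (by simp), List.take_of_length_le (by simp)]
    have a3 : y⁻¹.toWord = invRev Q ++ y⁻¹.toWord.drop (len x - i) := by rw [a2]; simp
    refine ⟨invRev (y⁻¹.toWord.drop (len x - i)), ?_⟩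
    have : y.toWord = invRev (y⁻¹.toWord) := by rw [toWord_inv, invRev_invRev]
    rw [this]
    conv_lhs => rw [a3]
    rw [invRev_append, invRev_invRev]
  have hly : len y = R.length + Q.length := by unfold len; rw [ey2]; simp
  obtain ⟨m, hm⟩ : ∃ m, R = Pl ++ m := by
    have p1 : Pl <+: y.toWord := ⟨S, ey1.symm⟩
    have p2 : R <+: y.toWord := ⟨Q, ey2.symm⟩
    obtain ⟨m, hm⟩ := List.prefix_of_prefix_length_le p1 p2 (by omega)
    exact ⟨m, hm.symm⟩
  have vx : x = mk Pl * mk Q := by rw [mul_mk, ← ex, mk_toWord]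
  have vy : y = mk Pl * mk m * mk Q := by rw [mul_mk, mul_mk, ← hm, ← ey2, mk_toWord]
  refine ⟨MulAut.conj (mk Pl)⁻¹ * (φ * τ⁻¹), OutEq.symm ⟨_, rfl⟩, ?_⟩
  have t1 : (MulAut.conj (mk Pl)⁻¹ * (φ * τ⁻¹)) ga = mk (Q ++ Pl) := by
    rw [MulAut.mul_apply, MulAut.mul_apply, e4, ← hx, vx, MulAut.conj_apply, ← mul_mk]; group
  have t2 : (MulAut.conj (mk Pl)⁻¹ * (φ * τ⁻¹)) gb = mk m := by
    rw [MulAut.mul_apply, MulAut.mul_apply, e3, _root_.map_mul φ, _root_.map_inv φ, ← hx, ← hy, vy, vx,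
      MulAut.conj_apply]; group
  unfold tot
  rw [t1, t2, ← hx, ← hy]
  have l1 := len_mk_le (Q ++ Pl)
  have l2 := len_mk_le m
  rw [List.length_append] at l1
  have : R.length = Pl.length + m.length := by rw [hm]; simp
  omega

open FreeGroup in
lemma redF (φ : MulAut F) (h1 : 0 < cg (φ ga) (φ ga)⁻¹) (h2 : 0 < cg (φ ga) (φ gb)) :
    ∃ φ', OutEq φ φ' ∧ tot φ' < tot φ := by
  set x := φ ga with hx
  set y := φ gb with hy
  unfold cg at h1 h2
  cases ex : x.toWord with
  | nil => simp [ex, cp] at h1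
  | cons c X =>
  cases ex' : x⁻¹.toWord with
  | nil => simp [ex', ex, cp] at h1
  | cons c' X' =>
  cases ey : y.toWord with
  | nil => simp [ex, ey, cp] at h2
  | cons d Y =>
  rw [ex, ex'] at h1
  rw [ex, ey] at h2
  have hc : c = c' := by by_contra hh; simp [cp, hh] at h1
  have hd : c = d := by by_contra hh; simp [cp, hh] at h2
  subst hc; subst hd
  have e1 : x.toWord = invRev X' ++ [linv c] := by
    have : x.toWord = invRev (x⁻¹.toWord) := by rw [toWord_inv, invRev_invRev]
    rw [this, ex', show c :: X' = [c] ++ X' from rfl, invRev_append]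
    rfl
  rw [ex] at e1
  obtain ⟨X2, hX2⟩ : ∃ X2, invRev X' = c :: X2 := by
    cases hh : invRev X' with
    | nil =>
      rw [hh] at e1
      simp only [List.nil_append, List.cons.injEq] at e1
      have := congrArg Prod.snd e1.1
      simp [linv] at this
    | cons q X2 =>
      rw [hh] at e1
      simp only [List.cons_append, List.cons.injEq] at e1
      exact ⟨X2, by rw [e1.1]⟩
  rw [hX2] at e1
  have vx : x = mk [c] * mk X2 * (mk [c])⁻¹ := by
    rw [← mk_linv, mul_mk, mul_mk, ← mk_toWord (x := x), ex, e1]; rfl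
  have vy : y = mk [c] * mk Y := by rw [mul_mk, ← mk_toWord (x := y), ey]; rfl
  refine ⟨MulAut.conj (mk [c])⁻¹ * φ, OutEq.symm ⟨_, rfl⟩, ?_⟩
  have t1 : (MulAut.conj (mk [c])⁻¹ * φ) ga = mk X2 := by
    rw [MulAut.mul_apply, ← hx, vx, MulAut.conj_apply]; group
  have t2 : (MulAut.conj (mk [c])⁻¹ * φ) gb = mk (Y ++ [c]) := by
    rw [MulAut.mul_apply, ← hy, vy, MulAut.conj_apply, ← mul_mk]; group
  unfold tot
  rw [t1, t2, ← hx, ← hy]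
  have l1 := len_mk_le X2
  have l2 := len_mk_le (Y ++ [c])
  have l3 : len x = X2.length + 2 := by unfold len; rw [ex, e1]; simp
  have l4 : len y = Y.length + 1 := by unfold len; rw [ey]; simp
  simp only [List.length_append, List.length_singleton] at l2
  omega

def Bad (P : MulAut F → Prop) (n : ℕ) (φ : MulAut F) : Prop :=
  (∀ ψ, tot ψ < n → P ψ) ∧ tot φ = n ∧ ¬ P φ

lemma iot_sw_ga (φ : MulAut F) : (φ * swp * iot * swp) ga = (φ ga)⁻¹ := by
  simp [MulAut.mul_apply]
lemma iot_sw_gb (φ : MulAut F) : (φ * swp * iot * swp) gb = φ gb := by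
  simp [MulAut.mul_apply]

lemma Bad_swap {P : MulAut F → Prop} (hs : ∀ φ, P (φ * swp) → P φ) {n φ} (h : Bad P n φ) :
    Bad P n (φ * swp) := by
  refine ⟨h.1, ?_, fun hh => h.2.2 (hs _ hh)⟩
  rw [← h.2.1]; unfold tot; simp [MulAut.mul_apply]; omega

lemma Bad_iota {P : MulAut F → Prop} (hi : ∀ φ, P (φ * iot) → P φ) {n φ} (h : Bad P n φ) :
    Bad P n (φ * iot) := by
  refine ⟨h.1, ?_, fun hh => h.2.2 (hi _ hh)⟩
  rw [← h.2.1]; unfold tot; simp [MulAut.mul_apply, len_inv]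

lemma Bad_F {P : MulAut F → Prop} (hO : ∀ φ ψ, OutEq φ ψ → P ψ → P φ) {n φ} (h : Bad P n φ)
    (h1 : 0 < cg (φ ga) (φ ga)⁻¹) : cg (φ ga) (φ gb) = 0 := by
  by_contra hh
  obtain ⟨φ', e, l⟩ := redF φ h1 (by omega)
  exact h.2.2 (hO _ _ e (h.1 _ (by rw [← h.2.1]; exact l)))

lemma Bad_K0 {P : MulAut F → Prop} (hO : ∀ φ ψ, OutEq φ ψ → P ψ → P φ)
    (ht : ∀ φ, P (φ * τ⁻¹) → P φ) {n φ} (h : Bad P n φ) (hl : len (φ ga) ≤ len (φ gb)) :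
    cg (φ ga) (φ gb) + cg (φ ga)⁻¹ (φ gb)⁻¹ < len (φ ga) := by
  by_contra hh
  obtain ⟨φ', e, l⟩ := redK φ hl (by omega)
  exact h.2.2 (ht _ (hO _ _ e (h.1 _ (by rw [← h.2.1]; exact l))))

lemma Bad_K {P : MulAut F → Prop} (hO : ∀ φ ψ, OutEq φ ψ → P ψ → P φ)
    (hs : ∀ φ, P (φ * swp) → P φ)
    (ht : ∀ φ, P (φ * τ⁻¹) → P φ) {n φ} (h : Bad P n φ) :
    cg (φ ga) (φ gb) + cg (φ ga)⁻¹ (φ gb)⁻¹ < len (φ ga) := by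
  rcases le_total (len (φ ga)) (len (φ gb)) with hl | hl
  · exact Bad_K0 hO ht h hl
  · have := Bad_K0 hO ht (Bad_swap hs h) (by simpa [MulAut.mul_apply] using hl)
    simp only [MulAut.mul_apply, swp_ga, swp_gb] at this
    rw [cg_comm, cg_comm (φ ga)⁻¹]
    omega

lemma aut_ga_ne (φ : MulAut F) : φ ga ≠ 1 := by
  intro h
  rw [map_eq_one_iff _ φ.injective] at h
  exact FreeGroup.of_ne_one 0 h

lemma zl_1 (φ : MulAut F) : zl φ (0, true) = φ ga := rfl
lemma zl_2 (φ : MulAut F) : zl φ (0, false) = (φ ga)⁻¹ := zl_linv φ (0, true)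
lemma zl_3 (φ : MulAut F) : zl φ (1, true) = φ gb := rfl
lemma zl_4 (φ : MulAut F) : zl φ (1, false) = (φ gb)⁻¹ := zl_linv φ (1, true)

lemma Bad_N {P : MulAut F → Prop} (hO : ∀ φ ψ, OutEq φ ψ → P ψ → P φ)
    (hs : ∀ φ, P (φ * swp) → P φ) (hi : ∀ φ, P (φ * iot) → P φ)
    (ht : ∀ φ, P (φ * τ⁻¹) → P φ) {n φ} (h : Bad P n φ) (t r : Fin 2 × Bool)
    (h1 : t ≠ (0, true)) (h2 : r ≠ (0, false)) :
    cg (zl φ (0, true)) (zl φ t) + cg (zl φ (0, false)) (zl φ r) < len (φ ga) := by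
  have b1 := Bad_iota hi h
  have b2 := Bad_swap hs (Bad_iota hi (Bad_swap hs h))
  have b3 := Bad_iota hi b2
  have k1 := Bad_K hO hs ht h
  have k2 := Bad_K hO hs ht b1
  have f1 := Bad_F hO h
  have f2 := Bad_F hO b1
  have f3 := Bad_F hO b2
  have f4 := Bad_F hO b3
  have i1 : (φ * iot) ga = φ ga := by simp [MulAut.mul_apply]
  have i2 : (φ * iot) gb = (φ gb)⁻¹ := by simp [MulAut.mul_apply]
  have i3 : (φ * swp * iot * swp * iot) ga = (φ ga)⁻¹ := by simp [MulAut.mul_apply]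
  have i4 : (φ * swp * iot * swp * iot) gb = (φ gb)⁻¹ := by simp [MulAut.mul_apply]
  rw [i1, i2, inv_inv] at k2
  rw [i1, i2] at f2
  rw [iot_sw_ga, iot_sw_gb, inv_inv] at f3
  rw [i3, i4, inv_inv] at f4
  have hX := cg_inv_lt (aut_ga_ne φ)
  have c1 := cg_comm (φ ga)⁻¹ (φ ga)
  have u1 : 1 ≤ cg (φ ga) (φ gb) → 1 ≤ cg (φ ga)⁻¹ (φ gb) → 1 ≤ cg (φ ga) (φ ga)⁻¹ :=
    fun p q => cg_ultra 1 p (by rw [cg_comm]; exact q)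
  have u2 : 1 ≤ cg (φ ga) (φ gb)⁻¹ → 1 ≤ cg (φ ga)⁻¹ (φ gb)⁻¹ → 1 ≤ cg (φ ga) (φ ga)⁻¹ :=
    fun p q => cg_ultra 1 p (by rw [cg_comm]; exact q)
  obtain ⟨t0, t1⟩ := t
  obtain ⟨r0, r1⟩ := r
  fin_cases t0 <;> fin_cases r0 <;> cases t1 <;> cases r1 <;>
    simp [zl_1, zl_2, zl_3, zl_4] at h1 h2 ⊢ <;> omega

lemma nielsen {P : MulAut F → Prop} (hW : ∀ β, IsW1 β⁻¹ → P β)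
    (hO : ∀ φ ψ, OutEq φ ψ → P ψ → P φ)
    (hs : ∀ φ, P (φ * swp) → P φ) (hi : ∀ φ, P (φ * iot) → P φ)
    (ht : ∀ φ, P (φ * τ⁻¹) → P φ) (φ : MulAut F) : P φ := by
  suffices H : ∀ n φ, tot φ = n → P φ from H _ φ rfl
  intro n
  induction n using Nat.strong_induction_on with
  | _ n ih =>
  intro φ hφ
  by_contra hP
  have B : Bad P n φ := ⟨fun ψ h => ih _ h ψ rfl, hφ, hP⟩
  have B' := Bad_swap hs B
  have N : ∀ s t r : Fin 2 × Bool, t ≠ s → r ≠ linv s →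
      cg (zl φ s) (zl φ t) + cg (zl φ (linv s)) (zl φ r) < len (zl φ s) := by
    have A := Bad_N hO hs hi ht B
    have A' := Bad_N hO hs hi ht B'
    have sw : ∀ i e, zl (φ * swp) (i, e) = zl φ (1 - i, e) := by
      intro i e
      fin_cases i <;> cases e <;>
        simp [zl_1, zl_2, zl_3, zl_4, MulAut.mul_apply]
    have A'' : ∀ t r : Fin 2 × Bool, t ≠ (1, true) → r ≠ (1, false) →
      cg (zl φ (1, true)) (zl φ t) + cg (zl φ (1, false)) (zl φ r) < len (φ gb) := by
      rintro ⟨t0, t1⟩ ⟨r0, r1⟩ h1 h2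
      have := A' (1 - t0, t1) (1 - r0, r1)
        (by revert h1; revert t0 t1; decide) (by revert h2; revert r0 r1; decide)
      simpa [sw, MulAut.mul_apply] using this
    rintro ⟨s0, s1⟩ t r h1 h2
    fin_cases s0 <;> cases s1
    · have := A r t h2 h1
      simp only [zl_1, zl_2, linv] at this ⊢
      simp [zl_1, zl_2, len_inv]
      omega
    · exact A t r h1 h2
    · have := A'' r t h2 h1
      simp only [zl_3, zl_4, linv] at this ⊢
      simp [zl_3, zl_4, len_inv]
      omega
    · exact A'' t r h1 h2
  refine hP (hW φ (ltg_W1 φ (fun s => (Finset.univ.erase s).sup fun t => cg (zl φ s) (zl φ t))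
    ?_ ?_))
  · intro s t hst
    exact Finset.le_sup (f := fun t => cg (zl φ s) (zl φ t)) (by simp [hst.symm])
  · intro s
    have ne : ∀ s : Fin 2 × Bool, (Finset.univ.erase s).Nonempty := fun s =>
      ⟨linv s, by revert s; decide⟩
    obtain ⟨t, ht1, ht2⟩ := Finset.exists_mem_eq_sup _ (ne s) (fun t => cg (zl φ s) (zl φ t))
    obtain ⟨r, hr1, hr2⟩ := Finset.exists_mem_eq_sup _ (ne (linv s))
      (fun t => cg (zl φ (linv s)) (zl φ t))
    simp only [ht2, hr2]
    exact N s t r (Finset.ne_of_mem_erase ht1) (Finset.ne_of_mem_erase hr1)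

lemma W1_cyclen {γ : MulAut F} (h : IsW1 γ) (y : F) : cyclen (γ y) = cyclen y := by
  have key : ∀ x ∈ ({ga, ga⁻¹, gb, gb⁻¹} : Set F), ∃ p : Fin 2, ∃ e : Bool,
      x = FreeGroup.mk [(p, e)] := by
    rintro x (rfl | rfl | rfl | rfl)
    · exact ⟨0, true, rfl⟩
    · exact ⟨0, false, (mk_inv_of 0).symm⟩
    · exact ⟨1, true, rfl⟩
    · exact ⟨1, false, (mk_inv_of 1).symm⟩
  obtain ⟨p0, e0, h0⟩ := key _ h.1
  obtain ⟨p1, e1, h1⟩ := key _ h.2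
  have hne : p0 ≠ p1 := by
    intro hp
    subst hp
    by_cases he : e0 = e1
    · subst he
      have : ga = gb := γ.injective (h0.trans h1.symm)
      exact absurd (FreeGroup.of_injective this) (by decide)
    · have h3 : γ ga = γ gb⁻¹ := by
        rw [map_inv, h0, h1, ← mk_linv]
        have : e0 = !e1 := by cases e0 <;> cases e1 <;> simp_all
        rw [this]; rfl
      have h4 : (ga : F) = gb⁻¹ := γ.injective h3
      have h5 := congrArg FreeGroup.toWord h4
      simp [ga, gb, FreeGroup.toWord_inv, FreeGroup.invRev] at h5
  have C := cyc_signed γ ![p0, p1] (by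
    intro i j hij
    fin_cases i <;> fin_cases j <;> simp at hij ⊢
    · exact hne hij
    · exact hne hij.symm) ![e0, e1] (by
    intro i
    fin_cases i
    · exact h0
    · exact h1)
  have c0 := C 0 y
  have c1 := C 1 y
  simp only [Matrix.cons_val_zero, Matrix.cons_val_one] at c0 c1
  rw [cyclen_eq, cyclen_eq, ← c0, ← c1]
  have : ∀ i : Fin 2, i = 0 ∨ i = 1 := by decide
  rcases this p0 with rfl | rfl <;> rcases this p1 with rfl | rfl
  · exact absurd rfl hne
  · rfl
  · exact add_comm _ _
  · exact absurd rfl hne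

lemma cyclen_swp (y : F) : cyclen (swp y) = cyclen y := by
  have := ff_swp y
  rw [ff_cyclen, ff_cyclen] at this
  exact_mod_cast this

lemma cyclen_iot (y : F) : cyclen (iot y) = cyclen y := by
  rw [cyclen_eq, cyclen_eq, cyc_iot, cyc_iot]

lemma iot_mul_iot : iot * iot = 1 := aut_ext (by simp) (by simp)
@[simp] lemma iot_iot (y : F) : iot (iot y) = y := DFunLike.congr_fun iot_mul_iot y

/-- The automorphism of a word in `σ`, `τ`. -/
def apM : List Bool → MulAut F
  | [] => 1
  | x :: w => (if x then σ else τ) * apM w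

lemma apM_apply (w : List Bool) (y : F) : apM w y = ap w y := by
  induction w with
  | nil => rfl
  | cons x w ih => simp only [apM, ap, MulAut.mul_apply, ih]

/-- inversion of both generators -/
def neg2 : MulAut F := iot * swp * iot * swp

@[simp] lemma neg2_ga : neg2 ga = ga⁻¹ := by simp [neg2, MulAut.mul_apply]
@[simp] lemma neg2_gb : neg2 gb = gb⁻¹ := by simp [neg2, MulAut.mul_apply]

lemma cyclen_neg2 (y : F) : cyclen (neg2 y) = cyclen y := by
  simp only [neg2, MulAut.mul_apply, cyclen_iot, cyclen_swp]

lemma σ_neg2 : OutEq (σ * neg2) (neg2 * σ) :=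
  out_of gb⁻¹ (by simp [MulAut.mul_apply, mul_assoc]) (by simp [MulAut.mul_apply, mul_assoc])

lemma τ_neg2 : OutEq (τ * neg2) (neg2 * τ) :=
  out_of ga⁻¹ (by simp [MulAut.mul_apply, mul_assoc]) (by simp [MulAut.mul_apply, mul_assoc])

lemma apM_neg2 (w : List Bool) : OutEq (apM w * neg2) (neg2 * apM w) := by
  induction w with
  | nil => simpa [apM] using OutEq.refl neg2
  | cons x w ih =>
    have s : OutEq ((if x then σ else τ) * neg2) (neg2 * (if x then σ else τ)) := by
      cases x
      · simpa using τ_neg2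
      · simpa using σ_neg2
    have a1 := (OutEq.refl (if x then σ else τ)).mul ih
    have a2 := s.mul (OutEq.refl (apM w))
    simp only [apM, mul_assoc] at a1 a2 ⊢
    exact a1.trans a2

lemma cyclen_ap_neg2 (w : List Bool) (y : F) : cyclen (ap w (neg2 y)) = cyclen (ap w y) := by
  have := (apM_neg2 w).cyclen y
  rw [MulAut.mul_apply, MulAut.mul_apply, cyclen_neg2, apM_apply, apM_apply] at this
  exact this

lemma iot_swp_eq (y : F) : iot (swp y) = swp (neg2 (iot y)) := by
  have : iot * swp = swp * neg2 * iot := aut_ext (by simp [MulAut.mul_apply]) (by simp [MulAut.mul_apply])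
  exact DFunLike.congr_fun this y

lemma rel_τ : OutEq (τ * iot * τ) iot :=
  out_of ga⁻¹ (by simp [MulAut.mul_apply]) (by simp [MulAut.mul_apply, mul_assoc])

lemma rel_σ : OutEq (σ * iot * τ) (swp * σ) :=
  out_of gb⁻¹ (by simp [MulAut.mul_apply, mul_assoc]) (by simp [MulAut.mul_apply, mul_assoc])

def PP (φ : MulAut F) : Prop := ∃ w : List Bool,
  (∀ y, cyclen (φ y) = cyclen (ap w y)) ∨ (∀ y, cyclen (φ y) = cyclen (ap w (iot y)))

lemma all_PP (φ : MulAut F) : PP φ := by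
  refine nielsen (P := PP) ?_ ?_ ?_ ?_ ?_ φ
  · intro β h
    refine ⟨[], Or.inl fun y => ?_⟩
    have := W1_cyclen h (β y)
    rw [← MulAut.mul_apply, inv_mul_cancel, MulAut.one_apply] at this
    exact this.symm
  · rintro φ ψ h ⟨w, hw⟩
    exact ⟨w, hw.imp (fun hh y => (h.cyclen y).trans (hh y)) (fun hh y => (h.cyclen y).trans (hh y))⟩
  · rintro φ ⟨w, hw | hw⟩
    · refine ⟨w.map not, Or.inl fun y => ?_⟩
      have := hw (swp y)
      rw [MulAut.mul_apply, swp_swp, ap_swp, cyclen_swp] at this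
      exact this
    · refine ⟨w.map not, Or.inr fun y => ?_⟩
      have := hw (swp y)
      rw [MulAut.mul_apply, swp_swp, iot_swp_eq, ap_swp, cyclen_swp, cyclen_ap_neg2] at this
      exact this
  · rintro φ ⟨w, hw | hw⟩
    · refine ⟨w, Or.inr fun y => ?_⟩
      have := hw (iot y)
      rwa [MulAut.mul_apply, iot_iot] at this
    · refine ⟨w, Or.inl fun y => ?_⟩
      have := hw (iot y)
      rwa [MulAut.mul_apply, iot_iot] at this
  · rintro φ ⟨w, hw | hw⟩
    · refine ⟨w ++ [false], Or.inl fun y => ?_⟩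
      have := hw (τ y)
      rw [MulAut.mul_apply, inv_τ] at this
      rw [this, ap_append]; rfl
    · have hw' : ∀ y, cyclen (φ y) = cyclen (ap w (iot (τ y))) := by
        intro y
        have := hw (τ y)
        rwa [MulAut.mul_apply, inv_τ] at this
      rcases List.eq_nil_or_concat w with rfl | ⟨w', x, rfl⟩
      · refine ⟨[false], Or.inl fun y => ?_⟩
        rw [hw' y]
        exact cyclen_iot _
      · cases x
        · refine ⟨w', Or.inr fun y => ?_⟩
          rw [hw' y, List.concat_eq_append, ap_append]
          have := ((OutEq.refl (apM w')).mul rel_τ).cyclen y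
          simp only [MulAut.mul_apply, apM_apply] at this
          exact this
        · refine ⟨w'.map not ++ [true], Or.inl fun y => ?_⟩
          rw [hw' y, List.concat_eq_append, ap_append]
          have := ((OutEq.refl (apM w')).mul rel_σ).cyclen y
          simp only [MulAut.mul_apply, apM_apply, ap_swp, cyclen_swp] at this
          rw [ap_append]
          exact this

/-- Exponent pairs of a word. -/
def cv (w : List Bool) : List (ℕ × ℕ) := w.map fun x => if x then (1, 0) else (0, 1)

lemma cv_ne {w : List Bool} (h : w ≠ []) : cv w ≠ [] := by simpa [cv] using h

lemma chainLen_cv (w : List Bool) : chainLen (cv w) = w.length := by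
  induction w with
  | nil => rfl
  | cons x w ih =>
    cases x <;> simp [cv, chainLen, sigmaCount, tauCount] at ih ⊢ <;> omega

lemma chainC1_cv (w : List Bool) : chainC1 (cv w) = apM w := by
  induction w with
  | nil => rfl
  | cons x w ih =>
    have : chainC1 (cv (x :: w)) = (if x then σ else τ) * chainC1 (cv w) := by
      cases x <;> simp [cv, chainC1]
    rw [this, ih]; rfl

lemma σ_inv_iot : OutEq σ⁻¹ (iot * σ * iot) := by
  have e1 : σ⁻¹ ga = ga * gb⁻¹ := by rw [MulAut.inv_apply, MulEquiv.symm_apply_eq]; simp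
  have e2 : σ⁻¹ gb = gb := by rw [MulAut.inv_apply, MulEquiv.symm_apply_eq]; simp
  exact out_of 1 (by simp [MulAut.mul_apply, e1]) (by simp [MulAut.mul_apply, e2])

lemma τ_inv_iot : OutEq τ⁻¹ (iot * τ * iot) := by
  have e3 : τ⁻¹ gb = gb * ga⁻¹ := by rw [MulAut.inv_apply, MulEquiv.symm_apply_eq]; simp
  have e4 : τ⁻¹ ga = ga := by rw [MulAut.inv_apply, MulEquiv.symm_apply_eq]; simp
  exact out_of ga (by simp [MulAut.mul_apply, e4]) (by simp [MulAut.mul_apply, e3, mul_assoc])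

lemma iot_conj_mul {α β α' β' : MulAut F} (h : OutEq α (iot * α' * iot))
    (h' : OutEq β (iot * β' * iot)) : OutEq (α * β) (iot * (α' * β') * iot) := by
  have := h.mul h'
  have e : iot * α' * iot * (iot * β' * iot) = iot * (α' * β') * iot := by
    calc iot * α' * iot * (iot * β' * iot) = iot * α' * (iot * iot) * β' * iot := by group
      _ = _ := by rw [iot_mul_iot]; group
  rwa [e] at this

lemma iot_conj_pow {α α' : MulAut F} (h : OutEq α⁻¹ (iot * α' * iot)) (n : ℕ) :
    OutEq (α ^ n)⁻¹ (iot * α' ^ n * iot) := by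
  induction n with
  | zero => simpa [iot_mul_iot] using OutEq.refl 1
  | succ n ih =>
    rw [pow_succ', pow_succ, mul_inv_rev]
    exact iot_conj_mul ih h

lemma chainC2_cv (w : List Bool) : OutEq (chainC2 (cv w)) (iot * apM w * iot) := by
  induction w with
  | nil => simpa [cv, chainC2, apM, iot_mul_iot] using OutEq.refl 1
  | cons x w ih =>
    have e : chainC2 (cv (x :: w)) = (if x then σ⁻¹ else τ⁻¹) * chainC2 (cv w) := by
      cases x <;> simp [cv, chainC2]
    rw [e]
    refine iot_conj_mul ?_ ih
    cases x
    · simpa using τ_inv_iot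
    · simpa using σ_inv_iot

lemma conv_C2 {α : MulAut F} (h : OutEq α⁻¹ (iot * α * iot)) (w : List Bool) (n : ℕ) (z : ℤ)
    (hz : z = -(n : ℤ)) (y : F) :
    cyclen ((α ^ z) (chainC2 (cv w) y)) = cyclen ((α ^ n) (ap w (iot y))) := by
  have e : α ^ z = (α ^ n)⁻¹ := by rw [hz, zpow_neg, zpow_natCast]
  have := (iot_conj_mul (iot_conj_pow h n) (chainC2_cv w)).cyclen y
  rw [e, ← MulAut.mul_apply, this]
  simp only [MulAut.mul_apply, cyclen_iot, apM_apply]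
/-- Theorem 4.7:  here `k = ‖u‖ + 1`. -/
theorem stmt12 (u v : F) (hu : u ≠ 1) (hv : v ≠ 1) (huv : cyclen v ≤ cyclen u)
    (H1 : ∀ c : List (ℕ × ℕ), c ≠ [] → chainLen c ≤ 2 * cyclen u + 5 →
      ((cyclen ((σ ^ (cyclen u + 2)) (chainC1 c u)) = cyclen ((σ ^ (cyclen u + 1)) (chainC1 c u)) ↔
        cyclen ((σ ^ (cyclen u + 2)) (chainC1 c v)) = cyclen ((σ ^ (cyclen u + 1)) (chainC1 c v))) ∧
       (cyclen ((τ ^ (cyclen u + 2)) (chainC1 c u)) = cyclen ((τ ^ (cyclen u + 1)) (chainC1 c u)) ↔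
        cyclen ((τ ^ (cyclen u + 2)) (chainC1 c v)) = cyclen ((τ ^ (cyclen u + 1)) (chainC1 c v)))))
    (H2 : ∀ c : List (ℕ × ℕ), c ≠ [] → chainLen c ≤ 2 * cyclen u + 5 →
      ((cyclen ((σ ^ (-(cyclen u : ℤ) - 2)) (chainC2 c u)) = cyclen ((σ ^ (-(cyclen u : ℤ) - 1)) (chainC2 c u)) ↔
        cyclen ((σ ^ (-(cyclen u : ℤ) - 2)) (chainC2 c v)) = cyclen ((σ ^ (-(cyclen u : ℤ) - 1)) (chainC2 c v))) ∧
       (cyclen ((τ ^ (-(cyclen u : ℤ) - 2)) (chainC2 c u)) = cyclen ((τ ^ (-(cyclen u : ℤ) - 1)) (chainC2 c u)) ↔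
        cyclen ((τ ^ (-(cyclen u : ℤ) - 2)) (chainC2 c v)) = cyclen ((τ ^ (-(cyclen u : ℤ) - 1)) (chainC2 c v))))) :
    ∃ C : ℝ, 0 < C ∧ ∀ φ : MulAut F,
      (cyclen (φ u) : ℝ) ≤ C * cyclen (φ v) ∧ (cyclen (φ v) : ℝ) ≤ C * cyclen (φ u) := by
  have hC1 : HC (cyclen u) (cyclen u + 1) u v := by
    intro w hw hl
    have := H1 (cv w) (cv_ne hw) (by rw [chainLen_cv]; exact hl)
    simp only [chainC1_cv, apM_apply] at this
    simp only [ff_cyclen, Nat.cast_inj]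
    exact this
  have hC2 : HC (cyclen u) (cyclen u + 1) (iot u) (iot v) := by
    intro w hw hl
    have := H2 (cv w) (cv_ne hw) (by rw [chainLen_cv]; exact hl)
    simp only [conv_C2 σ_inv_iot w (cyclen u + 2) (-(cyclen u : ℤ) - 2) (by push_cast; ring),
      conv_C2 σ_inv_iot w (cyclen u + 1) (-(cyclen u : ℤ) - 1) (by push_cast; ring),
      conv_C2 τ_inv_iot w (cyclen u + 2) (-(cyclen u : ℤ) - 2) (by push_cast; ring),
      conv_C2 τ_inv_iot w (cyclen u + 1) (-(cyclen u : ℤ) - 1) (by push_cast; ring)] at this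
    simp only [ff_cyclen, Nat.cast_inj]
    exact this
  have hu' : iot u ≠ 1 := by simpa using hu
  have hv' : iot v ≠ 1 := by simpa using hv
  have lu : ff u ≤ cyclen u := by rw [ff_cyclen]
  have lv : ff v ≤ cyclen u := by rw [ff_cyclen]; exact_mod_cast huv
  have lu' : ff (iot u) ≤ cyclen u := by rw [ff_cyclen, cyclen_iot]
  have lv' : ff (iot v) ≤ cyclen u := by rw [ff_cyclen, cyclen_iot]; exact_mod_cast huv
  have m1 := main_C1 hu hv lu lv hC1
  have m2 := main_C1 hv hu lv lu (HC_symm hC1)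
  have m3 := main_C1 hu' hv' lu' lv' hC2
  have m4 := main_C1 hv' hu' lv' lu' (HC_symm hC2)
  simp only [ff_cyclen] at m1 m2 m3 m4
  refine ⟨2 * (2 ^ (cyclen u + 3) * cyclen u), ?_, fun φ => ?_⟩
  · have : (0 : ℝ) < cyclen u := by exact_mod_cast cyclen_pos hu
    positivity
  · obtain ⟨w, hw | hw⟩ := all_PP φ
    · rw [hw u, hw v]
      exact ⟨by exact_mod_cast m1 w, by exact_mod_cast m2 w⟩
    · rw [hw u, hw v]
      exact ⟨by exact_mod_cast m3 w, by exact_mod_cast m4 w⟩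
end
end
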